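/- arXiv:2405.17107 — 2 statements merged into one kernel-verified Lean document; each statement's English description precedes it below -/
import Mathlib

section
/- Let 1 ≤ m ≤ d. There exists a set M of C² functions from ℝ^d to ℝ^m that is a countable intersection of open dense subsets (a G_δ set) of C²(ℝ^d, ℝ^m) endowed with the topology of C² convergence, such that for every f ∈ M and every compact set K ⊂ ℝ^d, the critical set Σ_f = {x ∈ ℝ^d : rank(Df(x)) ≤ m−1} satisfies H^{d−1}(Σ_f ∩ K) < +∞. -/
open MeasureTheory Set Topology
open scoped ENNReal

noncomputable section

abbrev E (n : ℕ) : Type := EuclideanSpace ℝ (Fin n)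

def unitCube (d : ℕ) : Set (E d) := {x | ∀ i, x i ∈ Set.Icc (0:ℝ) 1}

def openCube (d : ℕ) : Set (E d) := {x | ∀ i, x i ∈ Set.Ioo (0:ℝ) 1}

/-- Jacobian matrix of `f` at `x`. -/
def jac {d m : ℕ} (f : E d → E m) (x : E d) : Matrix (Fin m) (Fin d) ℝ :=
  Matrix.of fun i j => fderiv ℝ f x (EuclideanSpace.single j 1) i

/-- Critical set of `g` in the open unit cube. -/
def critSet {d m : ℕ} (g : E d → E m) : Set (E d) :=
  {x ∈ openCube d | (jac g x).rank ≤ m - 1}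

/-- `N_f(ε)`. -/
def Nf {d m : ℕ} (f : E d → E m) (ε : ℝ) : ℝ≥0∞ :=
  sInf { h : ℝ≥0∞ | ∃ g : E d → E m, ContDiff ℝ 1 g ∧
    (∀ x ∈ unitCube d, ‖g x - f x‖ ≤ ε ∧ ‖fderiv ℝ g x - fderiv ℝ f x‖ ≤ ε) ∧
    h = μH[(d:ℝ) - 1] (critSet g) }

/-- minimal modulus of continuity of `Df` on `U`. -/
def omegaC1 {d m : ℕ} (f : E d → E m) (U : Set (E d)) (δ : ℝ) : ℝ :=
  sSup {r : ℝ | ∃ x ∈ U, ∃ y ∈ U, ‖x - y‖ ≤ δ ∧ r = ‖fderiv ℝ f x - fderiv ℝ f y‖}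

def betaf {d m : ℕ} (f : E d → E m) (δ : ℝ) : ℝ :=
  omegaC1 f (unitCube d) (Real.sqrt d * δ) *
    (1 + Real.sqrt d * δ + 4 * (d:ℝ) ^ ((d:ℝ) + 1/2) * ((d:ℝ)+1)^4)

end

noncomputable section

open UniformOnFun

/-- The space of `C²` maps `ℝ^d → ℝ^m`. -/
abbrev C2Maps (d m : ℕ) : Type := {f : E d → E m // ContDiff ℝ 2 f}

/-- The topology of `C²` convergence on `C2Maps d m`: the topology induced by
uniform convergence of `f`, `Df` and `D²f` on compact subsets of `ℝ^d`. -/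
def c2Topology (d m : ℕ) : TopologicalSpace (C2Maps d m) :=
  TopologicalSpace.induced
    (fun f =>
      UniformOnFun.ofFun {K : Set (E d) | IsCompact K}
        (fun x => (f.1 x, fderiv ℝ f.1 x, fderiv ℝ (fderiv ℝ f.1) x)))
    (UniformOnFun.topologicalSpace (E d)
      (E m × (E d →L[ℝ] E m) × (E d →L[ℝ] (E d →L[ℝ] E m)))
      {K : Set (E d) | IsCompact K})

/-!
A point `x` is critical for `f` exactly when some unit vector `w` is orthogonal to the range of
`Df(x)`, so the critical set is the projection of the zero set of
`(x, w) ↦ (⟪w, Df(x) ·⟫, ‖w‖² - 1)`. This map goes from dimension `d + m` to dimension `d + 1`;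
where its zeros are regular they form an `(m - 1)`-dimensional submanifold, whose projection has
locally finite `(m - 1)`-dimensional Hausdorff measure.

A zero `(x, w)` is singular only if some `u ≠ 0` satisfies `Df(x) u = 0` and
`⟪w, D²f(x)(·, u)⟫ = 0`. On triples `(x, w, u)` normalised by `⟪w₀, w⟫ = 1` and `ℓ u = 1` this
degeneracy imposes one more equation than there are unknowns. A smooth map has a family of quadratic
perturbations in which each normalised triple is degenerate for at most one parameter, and that
parameter is a `C¹` function of the triple. The bad parameters are therefore a `C¹` image of a space
of smaller dimension, so arbitrarily small good parameters exist. As smooth maps are `C²`-dense, the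
maps without degenerate triple in a given compact set of normalised triples form an open dense set,
and countably many such sets exhaust all directions.
-/

section RegularLevelSets

open Filter Module

variable {X Y : Type*} [NormedAddCommGroup X] [NormedSpace ℝ X] [FiniteDimensional ℝ X]
  [NormedAddCommGroup Y] [NormedSpace ℝ Y] {G : X → Y} {G' : X →L[ℝ] Y} {z : X}

lemma finrank_ker_of_range_eq_top (hG' : G'.range = ⊤) {k : ℕ}
    (hk : finrank ℝ X = finrank ℝ Y + k) : finrank ℝ G'.ker = k := by
  have hrank : finrank ℝ G'.range + finrank ℝ G'.ker = finrank ℝ X :=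
    LinearMap.finrank_range_add_finrank_ker (G' : X →ₗ[ℝ] Y)
  have hrange : finrank ℝ G'.range = finrank ℝ Y := by rw [hG', finrank_top]
  omega

lemma hausdorffMeasure_finrank_lt_top_of_isBounded [MeasurableSpace X] [BorelSpace X] {s : Set X}
    (hs : Bornology.IsBounded s) : μH[finrank ℝ X] s < ⊤ :=
  have := isAddHaarMeasure_hausdorffMeasure (E := X)
  hs.measure_lt_top

variable [FiniteDimensional ℝ Y]

lemma exists_lipschitzOnWith_image_mem_nhdsWithin_level
    (hG : HasStrictFDerivAt G G' z) (hG' : G'.range = ⊤) :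
    ∃ (ψ : G'.ker → X) (C : NNReal) (t : Set G'.ker),
      Bornology.IsBounded t ∧ LipschitzOnWith C ψ t ∧ ψ '' t ∈ 𝓝[{x | G x = G z}] z := by
  let e := hG.implicitToOpenPartialHomeomorph G G' hG'
  let ψ : G'.ker → X := hG.implicitFunction G G' hG' (G z)
  obtain ⟨C, s, hs, hψ⟩ := (hG.to_implicitFunction hG').exists_lipschitzOnWith
  let t := s ∩ Metric.closedBall (0 : G'.ker) 1
  have ht : t ∈ 𝓝 (e z).2 := by
    rw [hG.implicitToOpenPartialHomeomorph_self hG']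
    exact inter_mem hs (Metric.closedBall_mem_nhds _ one_pos)
  refine ⟨ψ, C, t, Metric.isBounded_closedBall.subset inter_subset_right,
    hψ.mono inter_subset_left, ?_⟩
  have hcont : ContinuousAt (fun x => (e x).2) z := continuous_snd.continuousAt.comp
    (e.continuousAt (hG.mem_implicitToOpenPartialHomeomorph_source hG'))
  filter_upwards [nhdsWithin_le_nhds (hcont.eventually ht),
    nhdsWithin_le_nhds (hG.eq_implicitFunction hG'), self_mem_nhdsWithin] with x hxt hx hGx
  rw [hGx] at hx
  exact ⟨(e x).2, hxt, hx⟩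

lemma finiteAtFilter_hausdorffMeasure_level [MeasurableSpace X] [BorelSpace X]
    (hG : HasStrictFDerivAt G G' z) (hG' : G'.range = ⊤) {k : ℕ}
    (hk : finrank ℝ X = finrank ℝ Y + k) :
    (μH[k] : Measure X).FiniteAtFilter (𝓝[{x | G x = G z}] z) := by
  obtain ⟨ψ, C, t, ht, hψ, hlevel⟩ := exists_lipschitzOnWith_image_mem_nhdsWithin_level hG hG'
  refine ⟨ψ '' t, hlevel, ?_⟩
  borelize ↥G'.ker
  calc μH[k] (ψ '' t) ≤ C ^ (k : ℝ) * μH[k] t := hψ.hausdorffMeasure_image_le k.cast_nonneg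
    _ < ⊤ := by
      refine ENNReal.mul_lt_top (by simp) ?_
      rw [← finrank_ker_of_range_eq_top hG' hk]
      exact hausdorffMeasure_finrank_lt_top_of_isBounded ht

lemma hausdorffMeasure_regular_level_lt_top [MeasurableSpace X] [BorelSpace X]
    (hG : ContDiff ℝ 1 G) {y : Y} {k : ℕ} (hk : finrank ℝ X = finrank ℝ Y + k)
    {s : Set X} (hs : IsCompact s) (hy : ∀ x ∈ s, G x = y)
    (hreg : ∀ x ∈ s, (fderiv ℝ G x).range = ⊤) : μH[k] s < ⊤ :=
  hs.measure_lt_top_of_nhdsWithin fun x hx =>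
    (finiteAtFilter_hausdorffMeasure_level
      (hG.hasStrictFDerivAt one_ne_zero) (hreg x hx) hk).filter_mono
      (nhdsWithin_mono x fun _ hz => (hy _ hz).trans (hy x hx).symm)

end RegularLevelSets

section Mollification

open Filter Function Convolution

variable {X : Type*} [NormedAddCommGroup X] [NormedSpace ℝ X] [FiniteDimensional ℝ X]
  [MeasurableSpace X] [BorelSpace X] {μ : Measure X} [μ.IsAddHaarMeasure]
  {Y : Type*} [NormedAddCommGroup Y] [NormedSpace ℝ Y]

/-- The mollification of `f` by the bump function `φ`, normalised to have integral one. -/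
def mollify (μ : Measure X) (φ : ContDiffBump (0 : X)) (f : X → Y) : X → Y :=
  φ.normed μ ⋆[ContinuousLinearMap.lsmul ℝ ℝ, μ] f

lemma contDiff_mollify (φ : ContDiffBump (0 : X)) {f : X → Y} (hf : Continuous f) {n : ℕ∞} :
    ContDiff ℝ n (mollify μ φ f) :=
  φ.hasCompactSupport_normed.contDiff_convolution_left _ φ.contDiff_normed hf.locallyIntegrable

lemma fderiv_mollify (φ : ContDiffBump (0 : X)) {f : X → Y} (hf : ContDiff ℝ 1 f)
    (hc : HasCompactSupport f) : fderiv ℝ (mollify μ φ f) = mollify μ φ (fderiv ℝ f) := by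
  ext1 x
  exact (hc.hasFDerivAt_convolution_right _ φ.continuous_normed.locallyIntegrable hf x).fderiv

lemma tendsto_mollify [CompleteSpace Y] {ι : Type*} {l : Filter ι}
    {φ : ι → ContDiffBump (0 : X)} (hφ : Tendsto (fun i => (φ i).rOut) l (𝓝 0))
    {g : ι → X → Y} (hg : ∀ i, Continuous (g i)) {x : X} {y : Y}
    (hgy : Tendsto (uncurry g) (l ×ˢ 𝓝 x) (𝓝 y)) :
    Tendsto (fun p : ι × X => mollify μ (φ p.1) (g p.1) p.2) (l ×ˢ 𝓝 x) (𝓝 y) :=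
  ContDiffBump.convolution_tendsto_right (hφ.comp tendsto_fst)
    (Eventually.of_forall fun p => (hg p.1).aestronglyMeasurable)
    (hgy.comp (tendsto_fst.prodMap tendsto_id)) tendsto_snd

end Mollification

section TwoJets

open Function

variable {X : Type*} [NormedAddCommGroup X] [NormedSpace ℝ X]
  {Y : Type*} [NormedAddCommGroup Y] [NormedSpace ℝ Y]

/-- The space of values of 2-jets of maps `X → Y`: a value, a first and a second derivative. -/
abbrev TwoJet (X Y : Type*) [NormedAddCommGroup X] [NormedSpace ℝ X]
    [NormedAddCommGroup Y] [NormedSpace ℝ Y] : Type _ :=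
  Y × (X →L[ℝ] Y) × (X →L[ℝ] X →L[ℝ] Y)

/-- The 2-jet prolongation of a `C²` map. The target carries the compact-open topology, so that
`twoJet` induces the topology of `C²` convergence on compact sets. -/
def twoJet (f : {f : X → Y // ContDiff ℝ 2 f}) : C(X, TwoJet X Y) where
  toFun x := (f.1 x, fderiv ℝ f.1 x, fderiv ℝ (fderiv ℝ f.1) x)
  continuous_toFun := by
    have hf' : ContDiff ℝ 1 (fderiv ℝ f.1) := f.2.fderiv_right (by norm_num)
    exact f.2.continuous.prodMk (hf'.continuous.prodMk (hf'.continuous_fderiv one_ne_zero))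

lemma c2Topology_eq_induced_twoJet (d m : ℕ) :
    c2Topology d m = .induced (twoJet (X := E d) (Y := E m)) inferInstance := by
  have hcompactOpen := (ContinuousMap.isUniformEmbedding_toUniformOnFunIsCompact
    (α := E d) (β := TwoJet (E d) (E m))).isInducing.eq_induced
  refine Eq.trans ?_ (congrArg (TopologicalSpace.induced twoJet) hcompactOpen.symm)
  rw [induced_compose]
  rfl

lemma hasFDerivAt_fderiv_apply {f : X → Y} (hf : ContDiff ℝ 2 f) (x u : X) :
    HasFDerivAt (fun y => fderiv ℝ f y u) ((fderiv ℝ (fderiv ℝ f) x).flip u) x := by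
  have hf' : ContDiff ℝ 1 (fderiv ℝ f) := hf.fderiv_right (by norm_num)
  exact ((hf'.differentiable one_ne_zero x).hasFDerivAt.clm_apply
    (hasFDerivAt_const u x)).congr_fderiv (by simp)

lemma contDiff_fderiv_family {P : Type*} [NormedAddCommGroup P] [NormedSpace ℝ P]
    {F : P → X → Y} {n : WithTop ℕ∞} (hF : ContDiff ℝ (n + 1) (uncurry F)) :
    ContDiff ℝ n (uncurry fun p => fderiv ℝ (F p)) :=
  ContDiff.fderiv (f := fun q : P × X => F q.1)
    (hF.comp ((contDiff_fst.comp contDiff_fst).prodMk contDiff_snd)) contDiff_snd le_rfl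

lemma continuous_twoJet_family {P : Type*} [NormedAddCommGroup P] [NormedSpace ℝ P]
    {F : P → X → Y} (hF : ContDiff ℝ 2 (uncurry F)) :
    Continuous fun p => twoJet ⟨F p, hF.comp (contDiff_prodMk_right p)⟩ := by
  have hF' : ContDiff ℝ 1 (uncurry fun p => fderiv ℝ (F p)) := contDiff_fderiv_family hF
  have hF'' : ContDiff ℝ 0 (uncurry fun p => fderiv ℝ (fderiv ℝ (F p))) :=
    contDiff_fderiv_family hF'
  exact ContinuousMap.continuous_of_continuous_uncurry _
    (hF.continuous.prodMk (hF'.continuous.prodMk hF''.continuous))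

end TwoJets

section SmoothDensity

open Filter Function
open scoped ContDiff

lemma tendsto_continuousMap_of_forall_tendsto {α β ι : Type*} [TopologicalSpace α]
    [TopologicalSpace β] {l : Filter ι} {F : ι → C(α, β)} {f : C(α, β)}
    (hF : ∀ x, Tendsto (fun p : ι × α => F p.1 p.2) (l ×ˢ 𝓝 x) (𝓝 (f x))) :
    Tendsto F l (𝓝 f) := by
  refine ContinuousMap.tendsto_nhds_compactOpen.2 fun K hK U hU hfU => ?_
  have hprod : ∀ᶠ p in l ×ˢ 𝓝ˢ K, F p.1 p.2 ∈ U :=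
    hK.mem_prod_nhdsSet_of_forall fun x hx => hF x (hU.mem_nhds (hfU hx))
  exact hprod.curry.mono fun i hi => hi.self_of_nhdsSet

variable {X : Type*} [NormedAddCommGroup X] [NormedSpace ℝ X] [FiniteDimensional ℝ X]
  {Y : Type*} [NormedAddCommGroup Y] [NormedSpace ℝ Y]

/-- A cutoff function equal to one on the ball of radius `n + 1`. -/
def cutoff (X : Type*) [NormedAddCommGroup X] (n : ℕ) : ContDiffBump (0 : X) :=
  ⟨n + 1, n + 2, by positivity, by linarith⟩

/-- A bump function supported in the ball of radius `1 / (n + 1)`. -/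
def shrinkingBump (X : Type*) [NormedAddCommGroup X] (n : ℕ) : ContDiffBump (0 : X) :=
  ⟨1 / (n + 1) / 2, 1 / (n + 1), by positivity, half_lt_self (by positivity)⟩

lemma eventually_cutoff_smul_eventuallyEq (f : X → Y) (x : X) :
    ∀ᶠ p : ℕ × X in atTop ×ˢ 𝓝 x, (fun y => cutoff X p.1 y • f y) =ᶠ[𝓝 p.2] f := by
  obtain ⟨N, hN⟩ := exists_nat_gt ‖x‖
  filter_upwards [(eventually_ge_atTop N).prod_mk (Metric.isOpen_ball.mem_nhds
    (mem_ball_zero_iff.2 hN))] with ⟨n, y⟩ ⟨hn, hy⟩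
  filter_upwards [Metric.isOpen_ball.mem_nhds hy] with z hz
  have hNn : (N : ℝ) ≤ n + 1 := by exact_mod_cast Nat.le_succ_of_le hn
  have hone : cutoff X n z = 1 := (cutoff X n).one_of_mem_closedBall
    (Metric.closedBall_subset_closedBall hNn (Metric.ball_subset_closedBall hz))
  simp only [hone, one_smul]

lemma tendsto_mollify_shrinkingBump [CompleteSpace Y] [MeasurableSpace X] [BorelSpace X]
    {μ : Measure X} [μ.IsAddHaarMeasure] {g : ℕ → X → Y} (hg : ∀ n, Continuous (g n))
    {f : X → Y} (hf : Continuous f) {x : X}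
    (hgf : ∀ᶠ p : ℕ × X in atTop ×ˢ 𝓝 x, g p.1 p.2 = f p.2) :
    Tendsto (fun p : ℕ × X => mollify μ (shrinkingBump X p.1) (g p.1) p.2) (atTop ×ˢ 𝓝 x)
      (𝓝 (f x)) :=
  tendsto_mollify tendsto_one_div_add_atTop_nhds_zero_nat hg
    (((hf.tendsto x).comp tendsto_snd).congr' (hgf.mono fun _ hp => hp.symm))

lemma twoJet_mem_closure_image_smooth [CompleteSpace Y] (f : {f : X → Y // ContDiff ℝ 2 f}) :
    twoJet f ∈ closure (twoJet '' {g | ContDiff ℝ ∞ g.1}) := by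
  borelize X
  let g (n : ℕ) (x : X) : Y := cutoff X n x • f.1 x
  have hg (n : ℕ) : ContDiff ℝ 2 (g n) := (cutoff X n).contDiff.smul f.2
  have hg' (n : ℕ) : ContDiff ℝ 1 (fderiv ℝ (g n)) := (hg n).fderiv_right (by norm_num)
  have hgc (n : ℕ) : HasCompactSupport (g n) := (cutoff X n).hasCompactSupport.smul_right
  let h (n : ℕ) : X → Y := mollify .addHaar (shrinkingBump X n) (g n)
  have hh (n : ℕ) : ContDiff ℝ ∞ (h n) := contDiff_mollify _ (hg n).continuous
  have h' (n : ℕ) : fderiv ℝ (h n) = mollify .addHaar (shrinkingBump X n) (fderiv ℝ (g n)) :=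
    fderiv_mollify _ ((hg n).of_le one_le_two) (hgc n)
  have h'' (n : ℕ) : fderiv ℝ (fderiv ℝ (h n)) =
      mollify .addHaar (shrinkingBump X n) (fderiv ℝ (fderiv ℝ (g n))) := by
    rw [h', fderiv_mollify _ (hg' n) ((hgc n).fderiv (𝕜 := ℝ))]
  refine mem_closure_of_tendsto (b := atTop)
    (f := fun n => twoJet ⟨h n, mod_cast contDiff_infty.1 (hh n) 2⟩)
    ?_ (Eventually.of_forall fun n => ⟨_, hh n, rfl⟩)
  refine tendsto_continuousMap_of_forall_tendsto fun x => ?_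
  have hgf := eventually_cutoff_smul_eventuallyEq f.1 x
  refine (tendsto_mollify_shrinkingBump (fun n => (hg n).continuous) f.2.continuous
    (hgf.mono fun _ hp => hp.eq_of_nhds)).prodMk_nhds (Tendsto.prodMk_nhds ?_ ?_)
  · simp only [h']
    exact tendsto_mollify_shrinkingBump (fun n => (hg' n).continuous)
      (f.2.continuous_fderiv two_ne_zero) (hgf.mono fun _ hp => hp.fderiv.eq_of_nhds)
  · simp only [h'']
    exact tendsto_mollify_shrinkingBump (fun n => (hg' n).continuous_fderiv one_ne_zero)
      ((f.2.fderiv_right (m := 1) (by norm_num)).continuous_fderiv one_ne_zero)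
      (hgf.mono fun _ hp => hp.fderiv.fderiv.eq_of_nhds)

end SmoothDensity

section Degeneracy

open scoped RealInnerProductSpace

variable {X : Type*} [NormedAddCommGroup X] [NormedSpace ℝ X]
  {Y : Type*} [NormedAddCommGroup Y] [InnerProductSpace ℝ Y]

/-- The 2-jet `J = (y, A, H)` is degenerate at the conormal vector `w` and the kernel vector `u` if
`w` is orthogonal to the range of `A`, `u` lies in the kernel of `A`, and `⟪w, H · u⟫` vanishes.
For the 2-jet of `f` at `x`, such a `u ≠ 0` exists exactly when `(x, w)` is a singular zero of the
map `(x, w) ↦ ⟪w, fderiv ℝ f x ·⟫`. -/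
def IsDegenerate (J : TwoJet X Y) (w : Y) (u : X) : Prop :=
  (∀ v, ⟪w, J.2.1 v⟫ = 0) ∧ J.2.1 u = 0 ∧ ∀ v, ⟪w, J.2.2 v u⟫ = 0

lemma IsDegenerate.smul {J : TwoJet X Y} {w : Y} {u : X} (h : IsDegenerate J w u) (r s : ℝ) :
    IsDegenerate J (r • w) (s • u) := by
  obtain ⟨hw, hu, hwu⟩ := h
  refine ⟨fun v => ?_, ?_, fun v => ?_⟩
  · rw [real_inner_smul_left, hw, mul_zero]
  · rw [map_smul, hu, smul_zero]
  · rw [map_smul, real_inner_smul_left, real_inner_smul_right, hwu, mul_zero, mul_zero]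

lemma isClosed_setOf_isDegenerate :
    IsClosed {q : TwoJet X Y × Y × X | IsDegenerate q.1 q.2.1 q.2.2} := by
  simp only [IsDegenerate, ofPred_and, ofPred_forall]
  exact (isClosed_iInter fun v => isClosed_eq (by fun_prop) (by fun_prop)).inter
    ((isClosed_eq (by fun_prop) (by fun_prop)).inter
      (isClosed_iInter fun v => isClosed_eq (by fun_prop) (by fun_prop)))

/-- The 2-jet fields which for no triple `(x, w, u)` of `C` are degenerate at the base point `x`,
the conormal vector `w` and the kernel vector `u`. -/
def nondegenerateOn (C : Set (X × Y × X)) : Set C(X, TwoJet X Y) :=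
  {J | ∀ q ∈ C, ¬IsDegenerate (J q.1) q.2.1 q.2.2}

lemma isOpen_nondegenerateOn [LocallyCompactSpace X] {C : Set (X × Y × X)} (hC : IsCompact C) :
    IsOpen (nondegenerateOn C) := by
  refine isOpen_iff_eventually.2 fun J hJ =>
    hC.eventually_forall_of_forall_eventually fun q hq => ?_
  have hcont : Continuous fun p : C(X, TwoJet X Y) × X × Y × X => (p.1 p.2.1, p.2.2) := by fun_prop
  exact (isClosed_setOf_isDegenerate.isOpen_compl.preimage hcont).mem_nhds (hJ q hq)

end Degeneracy

section Perturbation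

open scoped RealInnerProductSpace

variable {X : Type*} [NormedAddCommGroup X] [NormedSpace ℝ X]
  {Y : Type*} [NormedAddCommGroup Y] [InnerProductSpace ℝ Y]

/-- The parameters of the perturbations removing the degeneracies whose conormal vector `w`
satisfies `⟪w₀, w⟫ = 1`. -/
abbrev PerturbParam (X : Type*) [NormedAddCommGroup X] [NormedSpace ℝ X] (w₀ : Y) : Type _ :=
  (X →L[ℝ] ℝ) × (ℝ ∙ w₀)ᗮ × (X →L[ℝ] ℝ)

/-- The quadratic perturbation of `g` with parameter `(a, c, b)`. It can move the three terms of the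
degeneracy condition at `(x, w, u)` independently when `⟪w₀, w⟫ = 1` and `ℓ u = 1`. -/
def perturb (ℓ : X →L[ℝ] ℝ) (w₀ : Y) (g : X → Y) (p : PerturbParam X w₀) (x : X) : Y :=
  g x + (p.1 x + ℓ x * p.2.2 x) • w₀ + ℓ x • (p.2.1 : Y)

variable {ℓ : X →L[ℝ] ℝ} {w₀ : Y} {g : X → Y}

lemma perturb_zero : perturb ℓ w₀ g 0 = g := by
  ext x
  simp [perturb]

lemma contDiff_uncurry_perturb {n : WithTop ℕ∞} (hg : ContDiff ℝ n g) :
    ContDiff ℝ n (Function.uncurry (perturb ℓ w₀ g)) := by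
  have hx : ContDiff ℝ n fun q : PerturbParam X w₀ × X => q.2 := contDiff_snd
  have hp : ContDiff ℝ n fun q : PerturbParam X w₀ × X => q.1 := contDiff_fst
  have hℓ := ℓ.contDiff.comp hx
  have hc := (ℝ ∙ w₀)ᗮ.subtypeL.contDiff.comp hp.snd.fst
  exact ((hg.comp hx).add (((hp.fst.clm_apply hx).add
    (hℓ.mul (hp.snd.snd.clm_apply hx))).smul contDiff_const)).add (hℓ.smul hc)

variable (a b : X →L[ℝ] ℝ) (c : (ℝ ∙ w₀)ᗮ) (x v u : X)

lemma fderiv_perturb_apply (hg : ContDiff ℝ 1 g) :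
    fderiv ℝ (perturb ℓ w₀ g (a, c, b)) x v =
      fderiv ℝ g x v + (a v + (ℓ x * b v + b x * ℓ v)) • w₀ + ℓ v • (c : Y) := by
  have hg' := (hg.differentiable one_ne_zero x).hasFDerivAt
  have hderiv := (hg'.add ((a.hasFDerivAt.add (ℓ.hasFDerivAt.mul b.hasFDerivAt)).smul_const w₀)).add
    (ℓ.hasFDerivAt.smul_const (c : Y))
  exact congr($(hderiv.fderiv) v)

lemma fderiv_fderiv_perturb_apply (hg : ContDiff ℝ 2 g) :
    fderiv ℝ (fderiv ℝ (perturb ℓ w₀ g (a, c, b))) x v u =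
      fderiv ℝ (fderiv ℝ g) x v u + (b u * ℓ v + ℓ u * b v) • w₀ := by
  have hF := hasFDerivAt_fderiv_apply
    ((contDiff_uncurry_perturb (ℓ := ℓ) hg).comp (contDiff_prodMk_right (a, c, b))) x u
  have hsum := ((hasFDerivAt_fderiv_apply hg x u).add ((((ℓ.hasFDerivAt.mul_const (b u)).add
    (b.hasFDerivAt.mul_const (ℓ u))).const_add (a u)).smul_const w₀)).add_const (ℓ u • (c : Y))
  refine congr($(hF.unique (hsum.congr_of_eventuallyEq (.of_forall fun y => ?_))) v)
  exact fderiv_perturb_apply a b c y u (hg.of_le one_le_two)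

end Perturbation

section Solving

open scoped RealInnerProductSpace

variable {X : Type*} [NormedAddCommGroup X] [NormedSpace ℝ X]
  {Y : Type*} [NormedAddCommGroup Y] [InnerProductSpace ℝ Y]

/-- The only parameter `p` for which `perturb ℓ w₀ g p` can have a degenerate 2-jet at `x`, with
conormal vector `w` and kernel vector `u`, when `⟪w₀, w⟫ = 1` and `ℓ u = 1`.
Here `q = (x, w, u)`. -/
def degenerateParam (ℓ : X →L[ℝ] ℝ) (w₀ : Y) (g : X → Y) (q : X × Y × X) : PerturbParam X w₀ :=
  let A := fderiv ℝ g q.1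
  let H := (fderiv ℝ (fderiv ℝ g) q.1).flip q.2.2
  let b := (⟪q.2.1, H q.2.2⟫ / 2) • ℓ - innerSL ℝ q.2.1 ∘L H
  let c := -(ℝ ∙ w₀)ᗮ.orthogonalProjectionOnto (A q.2.2)
  (-(innerSL ℝ q.2.1 ∘L A + (⟪q.2.1, c⟫ + b q.1) • ℓ + ℓ q.1 • b), c, b)

variable {ℓ : X →L[ℝ] ℝ} {w₀ : Y} {g : X → Y}

lemma contDiff_degenerateParam (hg : ContDiff ℝ 3 g) : ContDiff ℝ 1 (degenerateParam ℓ w₀ g) := by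
  have hx : ContDiff ℝ 1 fun q : X × Y × X => q.1 := contDiff_fst
  have hw : ContDiff ℝ 1 fun q : X × Y × X => q.2.1 := contDiff_snd.fst
  have hu : ContDiff ℝ 1 fun q : X × Y × X => q.2.2 := contDiff_snd.snd
  have hwL := (innerSL ℝ (E := Y)).contDiff.comp hw
  have hg' : ContDiff ℝ 2 (fderiv ℝ g) := hg.fderiv_right (by norm_num)
  have hA := (hg'.of_le one_le_two).comp hx
  have hH := ((ContinuousLinearMap.flipₗᵢ ℝ X X Y).contDiff.comp
    ((hg'.fderiv_right (m := 1) (by norm_num)).comp hx)).clm_apply hu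
  have hb := (((hw.inner ℝ (hH.clm_apply hu)).div_const 2).smul (contDiff_const (c := ℓ))).sub
    (hwL.clm_comp hH)
  have hc := ((ℝ ∙ w₀)ᗮ.orthogonalProjectionOnto.contDiff.comp (hA.clm_apply hu)).neg
  have hc' := (ℝ ∙ w₀)ᗮ.subtypeL.contDiff.comp hc
  have ha := (((hwL.clm_comp hA).add
    (((hw.inner ℝ hc').add (hb.clm_apply hx)).smul (contDiff_const (c := ℓ)))).add
      ((ℓ.contDiff.comp hx).smul hb)).neg
  exact ha.prodMk (hc.prodMk hb)

lemma eq_degenerateParam_of_isDegenerate (hg : ContDiff ℝ 2 g) {p : PerturbParam X w₀}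
    {x : X} {w : Y} {u : X} (hw : ⟪w₀, w⟫ = 1) (hu : ℓ u = 1)
    (h : IsDegenerate (twoJet ⟨perturb ℓ w₀ g p,
      (contDiff_uncurry_perturb hg).comp (contDiff_prodMk_right p)⟩ x) w u) :
    p = degenerateParam ℓ w₀ g (x, w, u) := by
  obtain ⟨a, c, b⟩ := p
  obtain ⟨hconormal, hkernel, hmixed⟩ := h
  simp only [twoJet, ContinuousMap.coe_mk, fderiv_perturb_apply _ _ _ _ _ (hg.of_le one_le_two),
    fderiv_fderiv_perturb_apply _ _ _ _ _ _ hg, inner_add_right, real_inner_smul_right,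
    real_inner_comm w₀ w, hw, hu, mul_one, one_mul] at hconormal hkernel hmixed
  have hb : b = (⟪w, fderiv ℝ (fderiv ℝ g) x u u⟫ / 2) • ℓ -
      innerSL ℝ w ∘L (fderiv ℝ (fderiv ℝ g) x).flip u := by
    have hbu := hmixed u
    ext v
    simp only [sub_apply, smul_apply, smul_eq_mul, ContinuousLinearMap.comp_apply,
      ContinuousLinearMap.flip_apply, innerSL_apply_apply]
    rw [hu, mul_one] at hbu
    linear_combination hmixed v - ℓ v / 2 * hbu
  have hc : c = -(ℝ ∙ w₀)ᗮ.orthogonalProjectionOnto (fderiv ℝ g x u) := by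
    have hproj := congrArg (ℝ ∙ w₀)ᗮ.orthogonalProjectionOnto hkernel
    have hw₀ : (ℝ ∙ w₀)ᗮ.orthogonalProjectionOnto w₀ = 0 := by simp
    simp only [map_add, map_smul, map_zero, hw₀, smul_zero, add_zero, one_smul,
      Submodule.orthogonalProjectionOnto_mem_subspace_eq_self] at hproj
    exact eq_neg_of_add_eq_zero_right hproj
  have ha : a = -(innerSL ℝ w ∘L fderiv ℝ g x + (⟪w, (c : Y)⟫ + b x) • ℓ + ℓ x • b) := by
    ext v
    simp only [neg_apply, add_apply, smul_apply, smul_eq_mul, ContinuousLinearMap.comp_apply,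
      innerSL_apply_apply]
    linear_combination hconormal v
  subst hb hc ha
  rfl

end Solving

section GenericNondegeneracy

open Module
open scoped RealInnerProductSpace ContDiff

variable {X : Type*} [NormedAddCommGroup X] [NormedSpace ℝ X] [FiniteDimensional ℝ X]
  {Y : Type*} [NormedAddCommGroup Y] [InnerProductSpace ℝ Y] [FiniteDimensional ℝ Y]

/-- The triples `(x, w, u)` normalised by `⟪w₀, w⟫ = 1` and `ℓ u = 1`. -/
def normalizedTriples (ℓ : X →L[ℝ] ℝ) (w₀ : Y) : Set (X × Y × X) :=
  {q | ⟪w₀, q.2.1⟫ = 1 ∧ ℓ q.2.2 = 1}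

variable {ℓ : X →L[ℝ] ℝ} {w₀ : Y} {g : X → Y}

lemma finrank_lt_finrank_perturbParam (hℓ : ℓ ≠ 0) :
    finrank ℝ (X × (ℝ ∙ w₀)ᗮ × ℓ.ker) < finrank ℝ (PerturbParam X w₀) := by
  have hker : finrank ℝ ℓ.ker < finrank ℝ X :=
    Submodule.finrank_lt fun h => hℓ (by ext v; exact (h ▸ Submodule.mem_top : v ∈ ℓ.ker))
  have hdual : finrank ℝ (X →L[ℝ] ℝ) = finrank ℝ X := by
    rw [← LinearMap.toContinuousLinearMap.finrank_eq, Subspace.dual_finrank_eq]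
  simp only [finrank_prod, hdual]
  omega

lemma dense_compl_image_degenerateParam (hg : ContDiff ℝ 3 g) :
    Dense (degenerateParam ℓ w₀ g '' normalizedTriples ℓ w₀)ᶜ := by
  obtain hempty | ⟨⟨x₁, w₁, u₁⟩, hw₁, hu₁⟩ := (normalizedTriples ℓ w₀).eq_empty_or_nonempty
  · simp [hempty]
  have hℓ : ℓ ≠ 0 := by
    rintro rfl
    exact zero_ne_one hu₁
  let chart (q : X × (ℝ ∙ w₀)ᗮ × ℓ.ker) : X × Y × X := (q.1, w₁ + q.2.1, u₁ + q.2.2)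
  have hchart : ContDiff ℝ 1 chart :=
    contDiff_fst.prodMk
      ((contDiff_const.add ((ℝ ∙ w₀)ᗮ.subtypeL.contDiff.comp contDiff_snd.fst)).prodMk
        (contDiff_const.add (ℓ.ker.subtypeL.contDiff.comp contDiff_snd.snd)))
  have hparam : ContDiff ℝ 1 (degenerateParam ℓ w₀ g ∘ chart) :=
    (contDiff_degenerateParam hg).comp hchart
  have hdense := hparam.dense_compl_range_of_finrank_lt_finrank (finrank_lt_finrank_perturbParam hℓ)
  refine hdense.mono (compl_subset_compl.2 (image_subset_iff.2 ?_))
  rintro ⟨x, w, u⟩ ⟨hw, hu⟩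
  have hw' : w - w₁ ∈ (ℝ ∙ w₀)ᗮ := Submodule.mem_orthogonal_singleton_iff_inner_right.2 (by
    rw [inner_sub_right, hw, hw₁, sub_self])
  have hu' : u - u₁ ∈ ℓ.ker :=
    LinearMap.mem_ker.2 ((map_sub ℓ u u₁).trans (by rw [hu, hu₁, sub_self]))
  exact ⟨(x, ⟨_, hw'⟩, ⟨_, hu'⟩), by simp [chart]⟩

lemma twoJet_mem_closure_nondegenerateOn_of_contDiff_three (hg : ContDiff ℝ 3 g)
    {C : Set (X × Y × X)} (hC : C ⊆ normalizedTriples ℓ w₀) :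
    twoJet ⟨g, hg.of_le (by norm_num)⟩ ∈ closure (range twoJet ∩ nondegenerateOn C) := by
  have hg₂ : ContDiff ℝ 2 g := hg.of_le (by norm_num)
  have hcont := continuous_twoJet_family (contDiff_uncurry_perturb (ℓ := ℓ) (w₀ := w₀) hg₂)
  have hmem := map_mem_closure hcont (dense_compl_image_degenerateParam hg 0)
    (t := range twoJet ∩ nondegenerateOn C) fun p hp =>
      ⟨mem_range_self _, fun q hq hdeg => hp ⟨q, hC hq,
        (eq_degenerateParam_of_isDegenerate hg₂ (hC hq).1 (hC hq).2 hdeg).symm⟩⟩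
  simpa only [perturb_zero] using hmem

lemma twoJet_mem_closure_nondegenerateOn {C : Set (X × Y × X)} (hC : C ⊆ normalizedTriples ℓ w₀)
    (f : {f : X → Y // ContDiff ℝ 2 f}) :
    twoJet f ∈ closure (range twoJet ∩ nondegenerateOn C) := by
  refine closure_minimal ?_ isClosed_closure (twoJet_mem_closure_image_smooth f)
  rintro _ ⟨g, hg, rfl⟩
  exact twoJet_mem_closure_nondegenerateOn_of_contDiff_three (mod_cast contDiff_infty.1 hg 3) hC

end GenericNondegeneracy

section ConormalMap

open scoped RealInnerProductSpace

variable {X : Type*} [NormedAddCommGroup X] [NormedSpace ℝ X]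
  {Y : Type*} [NormedAddCommGroup Y] [InnerProductSpace ℝ Y]

/-- The map whose level `(0, 1)` consists of the pairs `(x, w)` of a critical point `x` of `f` and a
unit vector `w` orthogonal to the range of `fderiv ℝ f x`. -/
def conormalMap (f : X → Y) (q : X × Y) : (X →L[ℝ] ℝ) × ℝ :=
  (innerSL ℝ q.2 ∘L fderiv ℝ f q.1, ‖q.2‖ ^ 2)

variable {f : X → Y}

lemma contDiff_conormalMap (hf : ContDiff ℝ 2 f) : ContDiff ℝ 1 (conormalMap f) :=
  (((innerSL ℝ (E := Y)).contDiff.comp contDiff_snd).clm_comp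
    ((hf.fderiv_right (m := 1) (by norm_num)).comp contDiff_fst)).prodMk (contDiff_snd.norm_sq ℝ)

lemma fderiv_conormalMap_fst_apply (hf : ContDiff ℝ 2 f) (x v u : X) (w ω : Y) :
    (fderiv ℝ (conormalMap f) (x, w) (v, ω)).1 u =
      ⟪w, fderiv ℝ (fderiv ℝ f) x v u⟫ + ⟪ω, fderiv ℝ f x u⟫ := by
  have hconormal := ((contDiff_conormalMap hf).differentiable one_ne_zero (x, w)).hasFDerivAt
  have heval := hconormal.fst.clm_apply (hasFDerivAt_const u (x, w))
  have hinner := (hasFDerivAt_snd (𝕜 := ℝ) (p := (x, w))).inner ℝ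
    ((hasFDerivAt_fderiv_apply hf x u).comp (x, w) hasFDerivAt_fst)
  simpa using congr($(heval.unique hinner) (v, ω))

lemma fderiv_conormalMap_snd (hf : ContDiff ℝ 2 f) (x v : X) (w ω : Y) :
    (fderiv ℝ (conormalMap f) (x, w) (v, ω)).2 = 2 * ⟪w, ω⟫ := by
  have hconormal := ((contDiff_conormalMap hf).differentiable one_ne_zero (x, w)).hasFDerivAt
  simpa using congr($(hconormal.snd.unique (hasFDerivAt_snd (p := (x, w))).norm_sq) (v, ω))

lemma exists_eq_eval [FiniteDimensional ℝ X] (φ : (X →L[ℝ] ℝ) →ₗ[ℝ] ℝ) :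
    ∃ u : X, ∀ η : X →L[ℝ] ℝ, φ η = η u := by
  obtain ⟨u, hu⟩ := (Module.evalEquiv ℝ X).surjective
    (φ ∘ₗ LinearMap.toContinuousLinearMap.toLinearMap)
  exact ⟨u, fun η => congr($hu η).symm⟩

lemma range_fderiv_conormalMap_eq_top [FiniteDimensional ℝ X] (hf : ContDiff ℝ 2 f)
    {x : X} {w : Y} (hw : w ≠ 0)
    (hconormal : ∀ v, ⟪w, fderiv ℝ f x v⟫ = 0)
    (hreg : ∀ u ≠ 0, ¬IsDegenerate (twoJet ⟨f, hf⟩ x) w u) :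
    (fderiv ℝ (conormalMap f) (x, w)).range = ⊤ := by
  by_contra hrange
  obtain ⟨Λ, hΛ, hle⟩ := Submodule.exists_le_ker_of_lt_top _ (lt_top_iff_ne_top.2 hrange)
  obtain ⟨u, hu⟩ := exists_eq_eval (Λ ∘ₗ LinearMap.inl ℝ _ ℝ)
  have hΛ_apply (η : X →L[ℝ] ℝ) (t : ℝ) : Λ (η, t) = η u + t * Λ (0, 1) := by
    have hsplit : ((η, t) : (X →L[ℝ] ℝ) × ℝ) = (η, 0) + t • (0, 1) := by simp
    rw [hsplit, map_add, map_smul, smul_eq_mul]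
    exact congrArg (· + _) (hu η)
  have hvanish (v : X) (ω : Y) :
      ⟪w, fderiv ℝ (fderiv ℝ f) x v u⟫ + ⟪ω, fderiv ℝ f x u⟫ + 2 * ⟪w, ω⟫ * Λ (0, 1) = 0 := by
    rw [← fderiv_conormalMap_fst_apply hf, ← fderiv_conormalMap_snd hf x v, ← hΛ_apply]
    exact hle ⟨(v, ω), rfl⟩
  have hΛ₁ : Λ (0, 1) = 0 := by
    have hww := hvanish 0 w
    simpa [hconormal, hw] using hww
  simp only [hΛ₁, mul_zero, add_zero] at hvanish
  have hu₀ : u ≠ 0 := by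
    rintro rfl
    refine hΛ (LinearMap.ext fun q => (hΛ_apply q.1 q.2).trans ?_)
    rw [hΛ₁, map_zero, mul_zero, add_zero, LinearMap.zero_apply]
  have hkernel : fderiv ℝ f x u = 0 := by simpa using hvanish 0 (fderiv ℝ f x u)
  have hmixed (v : X) : ⟪w, fderiv ℝ (fderiv ℝ f) x v u⟫ = 0 := by simpa using hvanish v 0
  exact hreg u hu₀ ⟨hconormal, hkernel, hmixed⟩

end ConormalMap

section CriticalSet

open Module
open scoped RealInnerProductSpace

variable {X : Type*} [NormedAddCommGroup X] [NormedSpace ℝ X]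
  {Y : Type*} [NormedAddCommGroup Y] [InnerProductSpace ℝ Y] [FiniteDimensional ℝ Y]

lemma exists_norm_eq_one_forall_inner_eq_zero {S : Submodule ℝ Y} (hS : S ≠ ⊤) :
    ∃ w : Y, ‖w‖ = 1 ∧ ∀ y ∈ S, ⟪w, y⟫ = 0 := by
  obtain ⟨w, hw, hw₀⟩ := Submodule.exists_mem_ne_zero_of_ne_bot
    (mt Submodule.orthogonal_eq_bot_iff.1 hS)
  refine ⟨‖w‖⁻¹ • w, norm_smul_inv_norm hw₀, fun y hy => ?_⟩
  rw [real_inner_smul_left, Submodule.inner_left_of_mem_orthogonal hy hw, mul_zero]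

variable [FiniteDimensional ℝ X] [MeasurableSpace X] [BorelSpace X] {f : X → Y}

theorem hausdorffMeasure_critical_inter_lt_top [Nontrivial Y] (hf : ContDiff ℝ 2 f)
    (hreg : ∀ x, ∀ w ≠ 0, ∀ u ≠ 0, ¬IsDegenerate (twoJet ⟨f, hf⟩ x) w u)
    {K : Set X} (hK : IsCompact K) :
    μH[(finrank ℝ Y : ℝ) - 1] ({x | (fderiv ℝ f x).range ≠ ⊤} ∩ K) < ⊤ := by
  borelize Y
  let s : Set (X × Y) := (K ×ˢ Metric.sphere 0 1) ∩ {q | conormalMap f q = (0, 1)}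
  have hs : IsCompact s := (hK.prod (isCompact_sphere 0 1)).inter_right
    (isClosed_eq (contDiff_conormalMap hf).continuous continuous_const)
  have hdim : finrank ℝ (X × Y) = finrank ℝ ((X →L[ℝ] ℝ) × ℝ) + (finrank ℝ Y - 1) := by
    have hY : 0 < finrank ℝ Y := finrank_pos
    rw [finrank_prod, finrank_prod, ← LinearMap.toContinuousLinearMap.finrank_eq,
      Subspace.dual_finrank_eq, finrank_self]
    omega
  have hs_lt_top : μH[(finrank ℝ Y - 1 : ℕ)] s < ⊤ := by
    refine hausdorffMeasure_regular_level_lt_top (contDiff_conormalMap hf) hdim hs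
      (fun q hq => hq.2) fun ⟨x, w⟩ hq => ?_
    have hw : w ≠ 0 := ne_zero_of_mem_unit_sphere ⟨w, hq.1.2⟩
    exact range_fderiv_conormalMap_eq_top hf hw (fun v => congr(($(hq.2)).1 v)) (hreg x w hw)
  have hcover : {x | (fderiv ℝ f x).range ≠ ⊤} ∩ K ⊆ Prod.fst '' s := by
    rintro x ⟨hx, hxK⟩
    obtain ⟨w, hw, hwx⟩ := exists_norm_eq_one_forall_inner_eq_zero hx
    refine ⟨(x, w), ⟨⟨hxK, mem_sphere_zero_iff_norm.2 hw⟩, Prod.ext ?_ ?_⟩, rfl⟩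
    · ext v
      exact hwx _ ⟨v, rfl⟩
    · simp [conormalMap, hw]
  rw [← Nat.cast_pred finrank_pos]
  calc μH[(finrank ℝ Y - 1 : ℕ)] ({x | (fderiv ℝ f x).range ≠ ⊤} ∩ K)
      ≤ μH[(finrank ℝ Y - 1 : ℕ)] (Prod.fst '' s) := measure_mono hcover
    _ ≤ μH[(finrank ℝ Y - 1 : ℕ)] s := by
      simpa using LipschitzWith.prod_fst.hausdorffMeasure_image_le (Nat.cast_nonneg _) s
    _ < ⊤ := hs_lt_top

end CriticalSet

section EuclideanCoordinates

variable {d m : ℕ}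

lemma jac_eq_toMatrix (f : E d → E m) (x : E d) :
    jac f x = LinearMap.toMatrix (EuclideanSpace.basisFun (Fin d) ℝ).toBasis
      (EuclideanSpace.basisFun (Fin m) ℝ).toBasis (fderiv ℝ f x).toLinearMap := by
  ext i j
  simp [jac, LinearMap.toMatrix_apply]

lemma range_fderiv_ne_top_of_rank_jac_lt {f : E d → E m} {x : E d} (hx : (jac f x).rank < m) :
    (fderiv ℝ f x).range ≠ ⊤ := by
  intro htop
  rw [jac_eq_toMatrix, Matrix.rank_eq_finrank_range_toLin _
    (EuclideanSpace.basisFun (Fin m) ℝ).toBasis (EuclideanSpace.basisFun (Fin d) ℝ).toBasis,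
    Matrix.toLin_toMatrix, htop, finrank_top, finrank_euclideanSpace_fin] at hx
  exact hx.false

/-- The triples `(x, w, u)` in a ball of radius `N` with `w i = 1` and `u j = 1`. Up to rescaling
`w` and `u`, every triple with `w ≠ 0` and `u ≠ 0` lies in one of these countably many
compact sets. -/
def coordinateTriples (N : ℕ) (i : Fin m) (j : Fin d) : Set (E d × E m × E d) :=
  Metric.closedBall 0 N ∩ normalizedTriples (EuclideanSpace.proj j) (EuclideanSpace.single i 1)

lemma isCompact_coordinateTriples (N : ℕ) (i : Fin m) (j : Fin d) :
    IsCompact (coordinateTriples N i j) :=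
  (isCompact_closedBall _ _).inter_right
    ((isClosed_eq (by fun_prop) continuous_const).inter
      (isClosed_eq (by fun_prop) continuous_const))

lemma exists_smul_mem_coordinateTriples (x : E d) {w : E m} (hw : w ≠ 0) {u : E d} (hu : u ≠ 0) :
    ∃ N i j, ∃ r s : ℝ, (x, r • w, s • u) ∈ coordinateTriples N i j := by
  obtain ⟨i, hi⟩ : ∃ i, w i ≠ 0 := by
    by_contra! h
    exact hw (by ext i; exact h i)
  obtain ⟨j, hj⟩ : ∃ j, u j ≠ 0 := by
    by_contra! h
    exact hu (by ext j; exact h j)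
  obtain ⟨N, hN⟩ := exists_nat_ge ‖(x, (w i)⁻¹ • w, (u j)⁻¹ • u)‖
  exact ⟨N, i, j, (w i)⁻¹, (u j)⁻¹, mem_closedBall_zero_iff.2 hN,
    by simp [EuclideanSpace.inner_single_left, hi], by simp [hj]⟩

lemma isOpen_twoJet_preimage {U : Set C(E d, TwoJet (E d) (E m))} (hU : IsOpen U) :
    IsOpen[c2Topology d m] (twoJet ⁻¹' U) := by
  rw [c2Topology_eq_induced_twoJet]
  exact isOpen_induced hU

lemma dense_twoJet_preimage {U : Set C(E d, TwoJet (E d) (E m))}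
    (hU : ∀ f : C2Maps d m, twoJet f ∈ closure (range twoJet ∩ U)) :
    @Dense (C2Maps d m) (c2Topology d m) (twoJet ⁻¹' U) := by
  intro f
  rw [c2Topology_eq_induced_twoJet, closure_induced, image_preimage_eq_range_inter]
  exact hU f

lemma exists_isOpen_dense_forall_not_isDegenerate (d m : ℕ) :
    ∃ F : ℕ → Set (C2Maps d m),
      (∀ n, IsOpen[c2Topology d m] (F n)) ∧
      (∀ n, @Dense (C2Maps d m) (c2Topology d m) (F n)) ∧
      ∀ f ∈ ⋂ n, F n, ∀ x, ∀ w ≠ 0, ∀ u ≠ 0, ¬IsDegenerate (twoJet f x) w u := by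
  -- The index `none` keeps the index type nonempty when `d = 0` or `m = 0`.
  obtain ⟨e, he⟩ := exists_surjective_nat (Option (ℕ × Fin m × Fin d))
  let U (o : Option (ℕ × Fin m × Fin d)) : Set C(E d, TwoJet (E d) (E m)) :=
    o.elim univ fun ⟨N, i, j⟩ => nondegenerateOn (coordinateTriples N i j)
  have hopen (o) : IsOpen (U o) := by
    rcases o with _ | ⟨N, i, j⟩
    · exact isOpen_univ
    · exact isOpen_nondegenerateOn (isCompact_coordinateTriples N i j)
  have hdense (o) (f : C2Maps d m) : twoJet f ∈ closure (range twoJet ∩ U o) := by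
    rcases o with _ | ⟨N, i, j⟩
    · exact subset_closure ⟨mem_range_self f, mem_univ _⟩
    · exact twoJet_mem_closure_nondegenerateOn inter_subset_right f
  refine ⟨fun n => twoJet ⁻¹' U (e n), fun n => isOpen_twoJet_preimage (hopen _),
    fun n => dense_twoJet_preimage (hdense _), fun f hf x w hw u hu hdeg => ?_⟩
  obtain ⟨N, i, j, r, s, hmem⟩ := exists_smul_mem_coordinateTriples x hw hu
  obtain ⟨n, hn⟩ := he (some (N, i, j))
  have hfU : twoJet f ∈ U (e n) := mem_iInter.1 hf n
  rw [hn] at hfU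
  exact hfU _ hmem (hdeg.smul r s)

end EuclideanCoordinates

theorem statement0_general (d m : ℕ) (hm : 1 ≤ m) :
    ∃ F : ℕ → Set (C2Maps d m),
      (∀ n, IsOpen[c2Topology d m] (F n)) ∧
      (∀ n, @Dense (C2Maps d m) (c2Topology d m) (F n)) ∧
      ∀ f ∈ ⋂ n, F n, ∀ K : Set (E d), IsCompact K →
        μH[(m:ℝ) - 1] ({x : E d | (jac f.1 x).rank ≤ m - 1} ∩ K) < ⊤ := by
  obtain ⟨F, hopen, hdense, hreg⟩ := exists_isOpen_dense_forall_not_isDegenerate d m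
  refine ⟨F, hopen, hdense, fun f hf K hK => ?_⟩
  have : Nonempty (Fin m) := ⟨⟨0, hm⟩⟩
  have hcrit := hausdorffMeasure_critical_inter_lt_top f.2 (hreg f hf) hK
  rw [finrank_euclideanSpace_fin] at hcrit
  exact (measure_mono (inter_subset_inter_left K fun x hx =>
    range_fderiv_ne_top_of_rank_jac_lt (Nat.lt_of_le_pred hm hx))).trans_lt hcrit

/-- there is a `G_δ` set (a countable intersection of open dense
sets for the topology of `C²` convergence) of `C²` maps `f : ℝ^d → ℝ^m` whose
critical set `Σ_f = {x : rank Df(x) ≤ m−1}` has locally finite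
`(d−1)`-dimensional Hausdorff measure. -/
theorem statement0 (d m : ℕ) (hm : 1 ≤ m) (hmd : m ≤ d) :
    ∃ F : ℕ → Set (C2Maps d m),
      (∀ n, IsOpen[c2Topology d m] (F n)) ∧
      (∀ n, @Dense (C2Maps d m) (c2Topology d m) (F n)) ∧
      ∀ f ∈ ⋂ n, F n, ∀ K : Set (E d), IsCompact K →
        μH[(d:ℝ) - 1] ({x : E d | (jac f.1 x).rank ≤ m - 1} ∩ K) < ⊤ := by
  obtain ⟨F, hopen, hdense, hF⟩ := statement0_general d m hm
  exact ⟨F, hopen, hdense, fun f hf K hK => (Measure.hausdorffMeasure_mono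
    (sub_le_sub_right (Nat.cast_le.2 hmd) 1) _).trans_lt (hF f hf K hK)⟩

end
end

section
/- Let 1 ≤ m ≤ d and let f : [0,1]^d → ℝ^m be a C^{1,α} function for some α ∈ (0,1], i.e. Df has finite Hölder seminorm ‖Df‖_{C^{0,α}} = sup_{x≠y} |Df(x)−Df(y)|/|x−y|^α. Then there exist a constant C_{[d,α]} > 0 depending only on d and α, and ε₀ > 0, such that for every 0 < ε ≤ ε₀, N_f(ε) ≤ C_{[d,α]} · (‖Df‖_{C^{0,α}}/ε)^{1/α}. -/
open MeasureTheory Set Topology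
open scoped ENNReal

/-! If `Df` oscillates by at most `ε` on the scale of a grid of mesh `1 / N`, blending the Taylor
polynomials of `f` at the grid points by a `C¹` piecewise polynomial partition of unity gives a `C¹`
function within a constant multiple of `ε` of `f`, each of whose components is a polynomial of
bounded degree on every cell. For a Hölder derivative, `N` can be taken of order
`(H / ε) ^ (1 / α)`.

When `m = d`, the Jacobian determinant of this approximation is a polynomial of bounded degree on
every cell, and adding a small multiple of the identity map makes it non-zero on each of them. The
zero set of a non-zero polynomial in a cube of side `s` has `H^{d-1}`-measure at most `C s^{d-1}`:
where some partial derivative does not vanish, the zero set is a countable union of Lipschitz graphs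
over coordinate hyperplanes, of bounded multiplicity, and the remaining zeros are zeros of a
non-zero partial derivative, which has smaller degree. Summing over the `N^d` cells of side `1 / N`
bounds the measure of the critical set by a multiple of `N^d N^{-(d-1)} = N`.

When `m < d`, embed `ℝᵐ` isometrically in `ℝᵈ` and project the approximation back orthogonally,
which does not create critical points. -/

section PolynomialCalculus

open MvPolynomial

variable {σ R : Type*}

theorem totalDegree_pderiv_le [CommSemiring R] (i : σ) (P : MvPolynomial σ R) :
    (pderiv i P).totalDegree ≤ P.totalDegree - 1 := by
  refine Finset.sup_le fun b hb => ?_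
  rw [mem_support_iff, coeff_pderiv] at hb
  have hle := le_totalDegree (mem_support_iff.2 (left_ne_zero_of_mul hb))
  rw [Finsupp.sum_add_index' (by simp) (by simp)] at hle
  simp only [Finsupp.sum_single_index] at hle
  lia

theorem exists_pderiv_ne_zero [CommSemiring R] [NoZeroDivisors R] [CharZero R]
    {P : MvPolynomial σ R} (hP : P.totalDegree ≠ 0) : ∃ i, pderiv i P ≠ 0 := by
  obtain ⟨b, hb, i, hi⟩ : ∃ b ∈ P.support, ∃ i, b i ≠ 0 := by
    by_contra! h
    refine hP ((totalDegree_eq_zero_iff σ P).2 fun b hb i => h b hb i)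
  refine ⟨i, fun hzero => ?_⟩
  have hcoeff := coeff_pderiv (i := i) P (b - Finsupp.single i 1)
  rw [hzero, tsub_add_cancel_of_le (Finsupp.single_le_iff.2 (Nat.one_le_iff_ne_zero.2 hi)),
    coeff_zero, eq_comm, mul_eq_zero] at hcoeff
  exact hcoeff.elim (mem_support_iff.1 hb) (Nat.cast_add_one_ne_zero _)

theorem hasStrictFDerivAt_eval {𝕜 : Type*} [NontriviallyNormedField 𝕜] [Fintype σ]
    (P : MvPolynomial σ 𝕜) (x : σ → 𝕜) :
    HasStrictFDerivAt (fun y => eval y P)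
      (∑ i, eval x (pderiv i P) • (ContinuousLinearMap.proj i : (σ → 𝕜) →L[𝕜] 𝕜)) x := by
  classical
  induction P using MvPolynomial.induction_on with
  | C a =>
    simp only [eval_C]
    refine (hasStrictFDerivAt_const a x).congr_fderiv ?_
    ext v
    simp
  | add P Q hP hQ =>
    simp only [eval_add]
    refine (hP.fun_add hQ).congr_fderiv ?_
    ext v
    simp [add_mul, Finset.sum_add_distrib]
  | mul_X P j hP =>
    simp only [eval_mul, eval_X]
    refine (hP.mul (hasStrictFDerivAt_apply j x)).congr_fderiv ?_
    ext v
    simp only [add_apply, smul_apply, sum_apply, ContinuousLinearMap.proj_apply, smul_eq_mul,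
      Derivation.leibniz, pderiv_X, Pi.single_apply, eq_comm (a := j), mul_ite, mul_one, mul_zero,
      map_add, map_mul, map_zero, eval_X, apply_ite (eval x), add_mul, ite_mul, zero_mul,
      Finset.sum_add_distrib, Finset.sum_ite_eq', Finset.mem_univ, ↓reduceIte, Finset.mul_sum]
    ring_nf

variable [CommRing R]

section Slice

variable [DecidableEq σ]

/-- The univariate polynomial obtained from `P` by freezing every variable except the `i`-th one at
the coordinates of `x`. -/
noncomputable def sliceAt (P : MvPolynomial σ R) (i : σ) (x : σ → R) : Polynomial R :=
  aeval (Function.update (fun j => Polynomial.C (x j)) i Polynomial.X) P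

theorem eval_sliceAt (P : MvPolynomial σ R) (i : σ) (x : σ → R) (t : R) :
    (sliceAt P i x).eval t = eval (Function.update x i t) P := by
  induction P using MvPolynomial.induction_on with
  | C a => simp [sliceAt]
  | add P Q hP hQ => simpa [sliceAt] using congrArg₂ (· + ·) hP hQ
  | mul_X P j hP =>
    rcases eq_or_ne j i with rfl | hj
    · simpa [sliceAt] using congrArg (· * t) hP
    · simpa [sliceAt, hj] using congrArg (· * x j) hP

theorem natDegree_sliceAt_le (P : MvPolynomial σ R) (i : σ) (x : σ → R) :
    (sliceAt P i x).natDegree ≤ P.totalDegree := by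
  refine (aeval_natDegree_le P le_rfl _ (n := 1) fun j => ?_).trans_eq (mul_one _)
  rcases eq_or_ne j i with rfl | hj
  · simpa using Polynomial.natDegree_X_le
  · simp [hj]

theorem derivative_sliceAt (P : MvPolynomial σ R) (i : σ) (x : σ → R) :
    (sliceAt P i x).derivative = sliceAt (pderiv i P) i x := by
  unfold sliceAt
  induction P using MvPolynomial.induction_on with
  | C a => simp
  | add P Q hP hQ => simp [hP, hQ]
  | mul_X P j hP =>
    rcases eq_or_ne j i with rfl | hj
    · simp only [map_mul, aeval_X, Function.update_self, Polynomial.derivative_mul, hP,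
        Polynomial.derivative_X, mul_one, Derivation.leibniz, pderiv_X, Pi.single_eq_same,
        smul_eq_mul, map_add]
      ring
    · simp [hP, hj, mul_comm]

end Slice

theorem encard_line_inter_simple_zeros_le [IsDomain R] (P : MvPolynomial σ R) (i : σ) (x : σ → R) :
    {y | (∀ j ≠ i, y j = x j) ∧ eval y P = 0 ∧ eval y (pderiv i P) ≠ 0}.encard ≤
      P.totalDegree := by
  classical
  have hupdate {y : σ → R} (hy : ∀ j ≠ i, y j = x j) : Function.update x i (y i) = y := by
    rw [Function.update_eq_iff]
    exact ⟨rfl, fun j hj => (hy j hj).symm⟩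
  by_cases hzero : sliceAt P i x = 0
  · rw [encard_eq_zero.2]
    · exact bot_le
    refine eq_empty_of_forall_notMem fun y ⟨hy, _, hderiv⟩ => hderiv ?_
    rw [← hupdate hy, ← eval_sliceAt, ← derivative_sliceAt, hzero]
    simp
  calc _ ≤ ((sliceAt P i x).roots.toFinset : Set R).encard := by
        refine encard_le_encard_of_injOn (f := fun y => y i) (fun y ⟨hy, hroot, _⟩ => ?_)
          fun y hy z hz (hyz : y i = z i) => ?_
        · simpa [hzero, eval_sliceAt, hupdate hy] using hroot
        · rw [← hupdate hy.1, ← hupdate hz.1, hyz]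
    _ ≤ P.totalDegree := by
        rw [encard_coe_eq_coe_finsetCard]
        exact_mod_cast (Multiset.toFinset_card_le _).trans
          ((Polynomial.card_roots' _).trans (natDegree_sliceAt_le P i x))

end PolynomialCalculus

theorem exists_nhds_norm_sub_le_of_partials_le {n : ℕ} {F : (Fin (n + 1) → ℝ) → ℝ}
    {x₀ c : Fin (n + 1) → ℝ} {i : Fin (n + 1)}
    (hF : HasStrictFDerivAt F
      (∑ j, c j • (ContinuousLinearMap.proj j : (Fin (n + 1) → ℝ) →L[ℝ] ℝ)) x₀)
    (hci : c i ≠ 0) (hc : ∀ j, |c j| ≤ |c i|) :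
    ∃ U ∈ 𝓝 x₀, ∀ x ∈ U, ∀ y ∈ U, F x = F y →
      ‖x - y‖ ≤ (2 * n + 1) * ‖i.removeNth x - i.removeNth y‖ := by
  have hpos : 0 < |c i| := abs_pos.2 hci
  obtain ⟨U, hU, hUF⟩ := Filter.mem_prod_self_iff.1
    (nhds_prod_eq (x := x₀) (y := x₀) ▸ hF.isLittleO.def (c := |c i| / 2) (by positivity))
  refine ⟨U, hU, fun x hx y hy hxy => ?_⟩
  set v := x - y
  set r := ‖i.removeNth x - i.removeNth y‖
  have hr0 : 0 ≤ r := norm_nonneg _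
  have hrest (j : Fin n) : |v (i.succAbove j)| ≤ r :=
    norm_le_pi_norm (i.removeNth x - i.removeNth y) j
  set w := ∑ j : Fin n, c (i.succAbove j) * v (i.succAbove j)
  have hlin : |c i * v i + w| ≤ |c i| / 2 * ‖v‖ := by
    have h : ‖F x - F y - _‖ ≤ |c i| / 2 * ‖v‖ := hUF (mk_mem_prod hx hy)
    rw [hxy, sub_self, zero_sub, norm_neg, Real.norm_eq_abs] at h
    simpa [v, w, Fin.sum_univ_succAbove _ i] using h
  have htail : |w| ≤ |c i| * (n * r) :=
    calc |w| ≤ ∑ _j : Fin n, |c i| * r := by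
          refine (Finset.abs_sum_le_sum_abs _ _).trans (Finset.sum_le_sum fun j _ => ?_)
          rw [abs_mul]
          exact mul_le_mul (hc _) (hrest j) (abs_nonneg _) hpos.le
      _ = |c i| * (n * r) := by
          simp only [Finset.sum_const, Finset.card_univ, Fintype.card_fin, nsmul_eq_mul]
          ring
  have hvi : |v i| ≤ n * r + ‖v‖ / 2 := by
    have htriangle : |c i * v i| ≤ |c i * v i + w| + |w| := by
      simpa using abs_sub (c i * v i + w) w
    refine le_of_mul_le_mul_left ?_ hpos
    rw [← abs_mul]
    linarith
  have hnorm : ‖v‖ ≤ max |v i| r := by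
    rw [pi_norm_le_iff_of_nonneg (by positivity)]
    exact i.succAboveCases (le_max_left _ _) fun j => (hrest j).trans (le_max_right _ _)
  have hnr : 0 ≤ n * r := by positivity
  rcases le_max_iff.1 hnorm with h | h <;> linarith

section FiberCount

variable {X Y : Type*}

theorem tsum_indicator_image_le {S : Set X} {T : ℕ → Set X} {π : X → Y} {D : ℕ}
    (hTS : ∀ k, T k ⊆ S) (hT : Pairwise (Function.onFun Disjoint T)) {y : Y}
    (hD : (S ∩ π ⁻¹' {y}).encard ≤ D) :
    ∑' k, (π '' T k).indicator (fun _ => (1 : ℝ≥0∞)) y ≤ D := by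
  rcases isEmpty_or_nonempty X with _ | _
  · simp [eq_empty_of_isEmpty]
  have hpre (k : ℕ) (hk : y ∈ π '' T k) : ∃ x ∈ S ∩ π ⁻¹' {y}, x ∈ T k := by
    obtain ⟨x, hx, rfl⟩ := hk
    exact ⟨x, ⟨hTS k hx, rfl⟩, hx⟩
  choose! g hg hgT using hpre
  have hinj : InjOn g {k | y ∈ π '' T k} := fun k hk l hl hkl => by
    by_contra hne
    exact disjoint_left.1 (hT hne) (hgT k hk) (by simpa only [hkl] using hgT l hl)
  calc ∑' k, (π '' T k).indicator (fun _ => (1 : ℝ≥0∞)) y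
      = ∑' k, {k | y ∈ π '' T k}.indicator (fun _ => (1 : ℝ≥0∞)) k := rfl
    _ = ({k | y ∈ π '' T k}.encard : ℝ≥0∞) := by
        rw [← tsum_subtype, ENNReal.tsum_set_one]
    _ ≤ D := by
        exact_mod_cast (encard_le_encard_of_injOn hg hinj).trans hD

variable [MetricSpace X] [MeasurableSpace X] [BorelSpace X]
  [MetricSpace Y] [MeasurableSpace Y] [BorelSpace Y]

theorem hausdorffMeasure_le_image_of_edist_le {T : Set X} {π : X → Y} {L : NNReal}
    (hL : ∀ x ∈ T, ∀ y ∈ T, edist x y ≤ L * edist (π x) (π y)) {s : ℝ} (hs : 0 ≤ s) :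
    μH[s] T ≤ (L : ℝ≥0∞) ^ s * μH[s] (π '' T) := by
  have hanti : AntilipschitzWith L (T.domRestrict π) := fun x y => hL x x.2 y y.2
  have h := hanti.le_hausdorffMeasure_image hs univ
  rwa [image_univ, range_domRestrict, ← (isometry_subtype_coe (s := T)).hausdorffMeasure_image
    (Or.inl hs), image_univ, Subtype.range_coe] at h

theorem exists_disjoint_measurable_cover [SecondCountableTopology X] {S : Set X}
    (hS : MeasurableSet S) {p : Set X → Prop} (hempty : p ∅) (hmono : ∀ A B, A ⊆ B → p B → p A)
    (hloc : ∀ x ∈ S, ∃ U ∈ 𝓝 x, p (S ∩ U)) :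
    ∃ T : ℕ → Set X, (∀ k, MeasurableSet (T k)) ∧ Pairwise (Function.onFun Disjoint T) ∧
      ⋃ k, T k = S ∧ ∀ k, p (T k) := by
  choose! U hU hpU using hloc
  obtain ⟨t, htS, htc, hcover⟩ := TopologicalSpace.countable_cover_nhdsWithin
    (f := fun x => interior (U x))
    fun x hx => mem_nhdsWithin_of_mem_nhds (interior_mem_nhds.2 (hU x hx))
  rcases t.eq_empty_or_nonempty with rfl | hne
  · obtain rfl : S = ∅ := by simpa using hcover
    exact ⟨fun _ => ∅, by simp, by simp [Pairwise, Function.onFun], by simp, fun _ => hempty⟩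
  obtain ⟨e, rfl⟩ := htc.exists_eq_range hne
  set V : ℕ → Set X := fun k => interior (U (e k))
  refine ⟨fun k => S ∩ disjointed V k,
    fun k => hS.inter (.disjointed (fun _ => isOpen_interior.measurableSet) k),
    fun k l hkl => (disjoint_disjointed V hkl).mono inter_subset_right inter_subset_right, ?_,
    fun k => hmono _ _ ?_ (hpU (e k) (htS (mem_range_self k)))⟩
  · rw [← inter_iUnion, iUnion_disjointed, inter_eq_left]
    simpa only [biUnion_range] using hcover
  · exact inter_subset_inter_right S ((disjointed_subset V k).trans interior_subset)

theorem hausdorffMeasure_le_mul_image_of_encard_fiber_le [PolishSpace X] {S : Set X}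
    (hS : MeasurableSet S) {π : X → Y} (hπ : ContinuousOn π S) {L : NNReal}
    (hL : ∀ x₀ ∈ S, ∃ U ∈ 𝓝 x₀, ∀ x ∈ S ∩ U, ∀ y ∈ S ∩ U,
      edist x y ≤ L * edist (π x) (π y))
    {D : ℕ} (hD : ∀ y, (S ∩ π ⁻¹' {y}).encard ≤ D) {s : ℝ} (hs : 0 ≤ s) :
    μH[s] S ≤ (L : ℝ≥0∞) ^ s * (D * μH[s] (π '' S)) := by
  obtain ⟨T, hTm, hTd, hST, hTL⟩ :=
    exists_disjoint_measurable_cover hS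
      (p := fun A => ∀ x ∈ A, ∀ y ∈ A, edist x y ≤ L * edist (π x) (π y))
      (by simp) (fun A B hAB hB x hx y hy => hB x (hAB hx) y (hAB hy)) hL
  have hTS (k : ℕ) : T k ⊆ S := hST ▸ subset_iUnion T k
  have hinj (k : ℕ) : InjOn π (T k) := fun x hx y hy hxy => by
    simpa [hxy] using hTL k x hx y hy
  have himage (k : ℕ) : MeasurableSet (π '' T k) :=
    (hTm k).image_of_continuousOn_injOn (hπ.mono (hTS k)) (hinj k)
  calc μH[s] S ≤ ∑' k, μH[s] (T k) := hST ▸ measure_iUnion_le T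
    _ ≤ ∑' k, (L : ℝ≥0∞) ^ s * μH[s] (π '' T k) :=
        ENNReal.tsum_le_tsum fun k => hausdorffMeasure_le_image_of_edist_le (hTL k) hs
    _ = (L : ℝ≥0∞) ^ s * ∫⁻ y in π '' S, ∑' k, (π '' T k).indicator (fun _ => 1) y ∂μH[s] := by
        rw [ENNReal.tsum_mul_left, lintegral_tsum fun k =>
          (measurable_const.indicator (himage k)).aemeasurable]
        congr! 3 with k
        rw [lintegral_indicator_const (himage k), one_mul, Measure.restrict_apply (himage k),
          inter_eq_left.2 (image_mono (hTS k))]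
    _ ≤ (L : ℝ≥0∞) ^ s * ∫⁻ _ in π '' S, D ∂μH[s] := by
        gcongr with y
        exact tsum_indicator_image_le hTS hTd (hD y)
    _ = (L : ℝ≥0∞) ^ s * (D * μH[s] (π '' S)) := by
        rw [setLIntegral_const]

end FiberCount

section PolynomialZeros

open MvPolynomial

variable {n : ℕ}

/-- The zeros of `P` at which the `i`-th partial derivative does not vanish and is the largest one
in absolute value. Near such a zero, the zero set is a Lipschitz graph over the hyperplane of the
remaining coordinates. -/
def steepZeros (P : MvPolynomial (Fin (n + 1)) ℝ) (i : Fin (n + 1)) : Set (Fin (n + 1) → ℝ) :=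
  {x | eval x P = 0 ∧ eval x (pderiv i P) ≠ 0 ∧
    ∀ j, |eval x (pderiv j P)| ≤ |eval x (pderiv i P)|}

theorem measurableSet_steepZeros (P : MvPolynomial (Fin (n + 1)) ℝ) (i : Fin (n + 1)) :
    MeasurableSet (steepZeros P i) := by
  have hcont (Q : MvPolynomial (Fin (n + 1)) ℝ) : Continuous fun x => eval x Q :=
    MvPolynomial.continuous_eval Q
  have hmax : MeasurableSet {x | ∀ j, |eval x (pderiv j P)| ≤ |eval x (pderiv i P)|} := by
    rw [ofPred_forall]
    exact .iInter fun j => (isClosed_le (hcont _).abs (hcont _).abs).measurableSet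
  exact (isClosed_eq (hcont P) continuous_const).measurableSet.inter
    ((isOpen_ne_fun (hcont (pderiv i P)) continuous_const).measurableSet.inter hmax)

theorem encard_steepZeros_inter_removeNth_fiber_le (P : MvPolynomial (Fin (n + 1)) ℝ)
    (i : Fin (n + 1)) (y : Fin n → ℝ) :
    (steepZeros P i ∩ i.removeNth ⁻¹' {y}).encard ≤ P.totalDegree := by
  refine (encard_le_encard ?_).trans
    (encard_line_inter_simple_zeros_le P i (i.insertNth 0 y : Fin (n + 1) → ℝ))
  rintro x ⟨⟨hzero, hderiv, -⟩, rfl⟩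
  refine ⟨fun j hj => ?_, hzero, hderiv⟩
  obtain ⟨k, rfl⟩ := Fin.exists_succAbove_eq hj
  simp [Fin.removeNth]

theorem hausdorffMeasure_Icc_inter_steepZeros_le (P : MvPolynomial (Fin (n + 1)) ℝ)
    (i : Fin (n + 1)) (a : Fin (n + 1) → ℝ) (s : ℝ) :
    μH[n] (Icc a (fun j => a j + s) ∩ steepZeros P i) ≤
      (2 * n + 1) ^ n * (P.totalDegree * ENNReal.ofReal s ^ n) := by
  set S := Icc a (fun j => a j + s) ∩ steepZeros P i
  have hcont : Continuous fun x : Fin (n + 1) → ℝ => i.removeNth x := by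
    unfold Fin.removeNth
    fun_prop
  have hgraph : ∀ x₀ ∈ S, ∃ U ∈ 𝓝 x₀, ∀ x ∈ S ∩ U, ∀ y ∈ S ∩ U,
      edist x y ≤ (2 * n + 1 : NNReal) * edist (i.removeNth x) (i.removeNth y) := fun x₀ hx₀ => by
    obtain ⟨U, hU, hlip⟩ := exists_nhds_norm_sub_le_of_partials_le
      (hasStrictFDerivAt_eval P x₀) hx₀.2.2.1 hx₀.2.2.2
    refine ⟨U, hU, fun x hx y hy => ?_⟩
    have h := hlip x hx.2 y hy.2 (hx.1.2.1.trans hy.1.2.1.symm)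
    rw [edist_nndist, edist_nndist]
    norm_cast
    rw [← NNReal.coe_le_coe]
    simpa [dist_eq_norm] using h
  have hfiber (y : Fin n → ℝ) : (S ∩ i.removeNth ⁻¹' {y}).encard ≤ P.totalDegree :=
    (encard_le_encard (inter_subset_inter_left _ inter_subset_right)).trans
      (encard_steepZeros_inter_removeNth_fiber_le P i y)
  have himage : i.removeNth '' S ⊆ Icc (i.removeNth a) (fun j => i.removeNth a j + s) := by
    rintro _ ⟨x, ⟨hx, -⟩, rfl⟩
    exact ⟨fun j => hx.1 _, fun j => hx.2 _⟩
  calc μH[n] S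
      ≤ ((2 * n + 1 : NNReal) : ℝ≥0∞) ^ (n : ℝ) *
          (P.totalDegree * μH[n] (i.removeNth '' S)) :=
        hausdorffMeasure_le_mul_image_of_encard_fiber_le
          (measurableSet_Icc.inter (measurableSet_steepZeros P i)) hcont.continuousOn hgraph
          hfiber n.cast_nonneg
    _ ≤ ((2 * n + 1 : NNReal) : ℝ≥0∞) ^ (n : ℝ) *
          (P.totalDegree * μH[n] (Icc (i.removeNth a) fun j => i.removeNth a j + s)) := by
        gcongr
    _ = (2 * n + 1) ^ n * (P.totalDegree * ENNReal.ofReal s ^ n) := by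
        have hvolume := hausdorffMeasure_pi_real (ι := Fin n)
        rw [Fintype.card_fin] at hvolume
        simp [hvolume, Real.volume_Icc_pi]

theorem zeros_subset_steepZeros_union (P : MvPolynomial (Fin (n + 1)) ℝ) (k : Fin (n + 1)) :
    {x | eval x P = 0} ⊆ (⋃ i, steepZeros P i) ∪ {x | eval x (pderiv k P) = 0} := by
  intro x hx
  obtain ⟨i, hi⟩ := Finite.exists_max fun j => |eval x (pderiv j P)|
  by_cases hzero : eval x (pderiv i P) = 0
  · right
    simpa [hzero] using hi k
  · exact .inl (mem_iUnion.2 ⟨i, hx, hzero, hi⟩)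

theorem hausdorffMeasure_Icc_inter_zeros_le {P : MvPolynomial (Fin (n + 1)) ℝ} (hP : P ≠ 0)
    (a : Fin (n + 1) → ℝ) (s : ℝ) :
    μH[n] (Icc a (fun j => a j + s) ∩ {x | eval x P = 0}) ≤
      (n + 1) * (2 * n + 1) ^ n * P.totalDegree ^ 2 * ENNReal.ofReal s ^ n := by
  induction hD : P.totalDegree using Nat.strong_induction_on generalizing P with
  | _ D ih =>
  rcases eq_or_ne D 0 with rfl | hD0
  · obtain ⟨c, rfl⟩ : ∃ c, P = C c := ⟨_, totalDegree_eq_zero_iff_eq_C.1 hD⟩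
    have hc : c ≠ 0 := fun h => hP (by simp [h])
    simp [hc]
  obtain ⟨k, hk⟩ := exists_pderiv_ne_zero (hD ▸ hD0)
  have hlt : (pderiv k P).totalDegree < D := by
    have := totalDegree_pderiv_le k P
    lia
  set Q := Icc a (fun j => a j + s)
  set B : ℝ≥0∞ := (2 * n + 1) ^ n * ENNReal.ofReal s ^ n with hB
  have hsq : D + (pderiv k P).totalDegree ^ 2 ≤ D ^ 2 := by nlinarith
  calc μH[n] (Q ∩ {x | eval x P = 0})
      ≤ μH[n] ((⋃ i, Q ∩ steepZeros P i) ∪ Q ∩ {x | eval x (pderiv k P) = 0}) := by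
        rw [← inter_iUnion, ← inter_union_distrib_left]
        exact measure_mono (inter_subset_inter_right Q (zeros_subset_steepZeros_union P k))
    _ ≤ ∑ i, μH[n] (Q ∩ steepZeros P i) + μH[n] (Q ∩ {x | eval x (pderiv k P) = 0}) :=
        (measure_union_le _ _).trans (by gcongr; exact measure_iUnion_fintype_le _ _)
    _ ≤ ∑ _i : Fin (n + 1), D * B +
          (n + 1) * (2 * n + 1) ^ n * (pderiv k P).totalDegree ^ 2 * ENNReal.ofReal s ^ n := by
        gcongr with i
        · refine (hausdorffMeasure_Icc_inter_steepZeros_le P i a s).trans_eq ?_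
          rw [hD, hB]
          ring
        · exact ih _ hlt hk rfl
    _ = (n + 1) * B * (D + (pderiv k P).totalDegree ^ 2 : ℕ) := by
        rw [Finset.sum_const, Finset.card_univ, Fintype.card_fin, nsmul_eq_mul, hB]
        push_cast
        ring
    _ ≤ (n + 1) * B * (D ^ 2 : ℕ) := by gcongr
    _ = (n + 1) * (2 * n + 1) ^ n * D ^ 2 * ENNReal.ofReal s ^ n := by
        rw [hB]
        push_cast
        ring

end PolynomialZeros

section CubicBump

theorem hasDerivAt_max_zero_sq (u : ℝ) :
    HasDerivAt (fun v : ℝ => max v 0 ^ 2) (2 * max u 0) u := by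
  refine hasDerivAt_of_hasDerivAt_of_ne' (x := 0) (g := fun v => 2 * max v 0) (fun v hv => ?_)
    (by fun_prop) (by fun_prop) u
  rcases hv.lt_or_gt with hneg | hpos
  · rw [max_eq_right hneg.le, mul_zero]
    refine (hasDerivAt_const v (0 : ℝ)).congr_of_eventuallyEq ?_
    filter_upwards [eventually_lt_nhds hneg] with w hw
    simp [max_eq_right hw.le]
  · rw [max_eq_left hpos.le]
    refine ((hasDerivAt_id v).pow 2).congr_of_eventuallyEq ?_ |>.congr_deriv (by simp)
    filter_upwards [eventually_gt_nhds hpos] with w hw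
    simp [max_eq_left hw.le]

theorem contDiff_max_zero_sq : ContDiff ℝ 1 fun v : ℝ => max v 0 ^ 2 := by
  refine contDiff_one_iff_deriv.2 ⟨fun u => (hasDerivAt_max_zero_sq u).differentiableAt, ?_⟩
  rw [funext fun u => (hasDerivAt_max_zero_sq u).deriv]
  fun_prop

/-- The `C¹` transition function equal to `0` on `(-∞, 0]`, to `3t² - 2t³` on `[0, 1]` and to `1` on
`[1, ∞)`. Writing it through truncated powers displays it as a piecewise polynomial with breakpoints
`0` and `1`. -/
def cubicStep (t : ℝ) : ℝ :=
  max t 0 ^ 2 * (3 - 2 * t) + max (t - 1) 0 ^ 2 * (2 * t + 1)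

theorem contDiff_cubicStep : ContDiff ℝ 1 cubicStep :=
  (contDiff_max_zero_sq.mul (by fun_prop)).add
    ((contDiff_max_zero_sq.comp (g := fun v : ℝ => max v 0 ^ 2) (by fun_prop)).mul (by fun_prop))

theorem cubicStep_of_nonpos {t : ℝ} (ht : t ≤ 0) : cubicStep t = 0 := by
  simp [cubicStep, max_eq_right ht, max_eq_right (show t - 1 ≤ 0 by linarith)]

theorem cubicStep_of_one_le {t : ℝ} (ht : 1 ≤ t) : cubicStep t = 1 := by
  rw [cubicStep, max_eq_left (by linarith), max_eq_left (by linarith)]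
  ring

theorem hasDerivAt_cubicStep (t : ℝ) :
    HasDerivAt cubicStep (6 * (max t 0 * (1 - t) + max (t - 1) 0 * t)) t := by
  have hleft := (hasDerivAt_max_zero_sq t).mul
    (((hasDerivAt_id t).const_mul 2).const_sub 3)
  have hright := ((hasDerivAt_max_zero_sq (t - 1)).comp t ((hasDerivAt_id t).sub_const 1)).mul
    (((hasDerivAt_id t).const_mul 2).add_const 1)
  refine (hleft.add hright).congr_deriv ?_
  have hsq (u : ℝ) : max u 0 ^ 2 = max u 0 * u := by
    rcases le_total u 0 with h | h <;> simp [h, sq]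
  simp only [Function.comp_apply, id_eq, hsq]
  ring

theorem deriv_cubicStep_mem_Icc (t : ℝ) : deriv cubicStep t ∈ Icc (0 : ℝ) 2 := by
  rw [(hasDerivAt_cubicStep t).deriv]
  rcases le_total t 0 with h0 | h0
  · simp [max_eq_right h0, max_eq_right (show t - 1 ≤ 0 by linarith)]
  rcases le_total t 1 with h1 | h1
  · rw [max_eq_left h0, max_eq_right (by linarith)]
    constructor <;> nlinarith [sq_nonneg (2 * t - 1)]
  · rw [max_eq_left h0, max_eq_left (by linarith)]
    constructor <;> linarith

theorem monotone_cubicStep : Monotone cubicStep :=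
  monotone_of_deriv_nonneg (contDiff_cubicStep.differentiable one_ne_zero)
    fun t => (deriv_cubicStep_mem_Icc t).1

theorem cubicStep_mem_Icc (t : ℝ) : cubicStep t ∈ Icc (0 : ℝ) 1 :=
  ⟨(cubicStep_of_nonpos (min_le_right t 0)).ge.trans (monotone_cubicStep (min_le_left t 0)),
    (monotone_cubicStep (le_max_left t 1)).trans (cubicStep_of_one_le (le_max_right t 1)).le⟩

/-- The `C¹` piecewise cubic bump supported on `[-1, 1]` whose integer translates form a partition
of unity. -/
def cubicBump (t : ℝ) : ℝ :=
  cubicStep (t + 1) - cubicStep t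

theorem contDiff_cubicBump : ContDiff ℝ 1 cubicBump :=
  (contDiff_cubicStep.comp (by fun_prop)).sub contDiff_cubicStep

theorem cubicBump_nonneg (t : ℝ) : 0 ≤ cubicBump t :=
  sub_nonneg.2 (monotone_cubicStep (by linarith))

theorem cubicBump_le_one (t : ℝ) : cubicBump t ≤ 1 := by
  have h₁ := (cubicStep_mem_Icc (t + 1)).2
  have h₂ := (cubicStep_mem_Icc t).1
  rw [cubicBump]
  linarith

theorem cubicBump_of_one_le_abs {t : ℝ} (ht : 1 ≤ |t|) : cubicBump t = 0 := by
  rw [cubicBump]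
  rcases le_abs.1 ht with h | h
  · rw [cubicStep_of_one_le (by linarith), cubicStep_of_one_le h, sub_self]
  · rw [cubicStep_of_nonpos (by linarith), cubicStep_of_nonpos (by linarith), sub_self]

theorem abs_deriv_cubicBump_le (t : ℝ) : |deriv cubicBump t| ≤ 2 := by
  have hdiff : Differentiable ℝ cubicStep := contDiff_cubicStep.differentiable one_ne_zero
  have hderiv : deriv cubicBump t = deriv cubicStep (t + 1) - deriv cubicStep t :=
    (((hdiff (t + 1)).hasDerivAt.comp_add_const t 1).sub (hdiff t).hasDerivAt).deriv
  obtain ⟨h₁, h₂⟩ := deriv_cubicStep_mem_Icc (t + 1)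
  obtain ⟨h₃, h₄⟩ := deriv_cubicStep_mem_Icc t
  rw [hderiv, abs_le]
  constructor <;> linarith

theorem sum_cubicBump_sub {N : ℕ} {t : ℝ} (ht : t ∈ Icc (0 : ℝ) N) :
    ∑ j : Fin (N + 1), cubicBump (t - j) = 1 := by
  have htelescope : ∑ j ∈ Finset.range (N + 1), cubicBump (t - j) =
      cubicStep (t + 1) - cubicStep (t - N) := by
    convert Finset.sum_range_sub' (fun j : ℕ => cubicStep (t + 1 - j)) (N + 1) using 2
    · rw [cubicBump]
      push_cast
      congr 2 <;> ring
    · simp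
    · push_cast
      congr 1
      ring
  rw [Fin.sum_univ_eq_sum_range fun j : ℕ => cubicBump (t - j), htelescope,
    cubicStep_of_one_le (by linarith [ht.1]), cubicStep_of_nonpos (by linarith [ht.2]), sub_zero]

end CubicBump

section IsPolynomialOn

variable {ι : Type*} {Q : Set (EuclideanSpace ℝ ι)} {D D' : ℕ} {h h' : EuclideanSpace ℝ ι → ℝ}

/-- On the set `Q`, the function `h` agrees with a polynomial of total degree at most `D` in the
coordinates. -/
def IsPolynomialOn (Q : Set (EuclideanSpace ℝ ι)) (D : ℕ) (h : EuclideanSpace ℝ ι → ℝ) : Prop :=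
  ∃ P : MvPolynomial ι ℝ, P.totalDegree ≤ D ∧ ∀ x ∈ Q, h x = MvPolynomial.eval x P

namespace IsPolynomialOn

theorem const (c : ℝ) : IsPolynomialOn Q D fun _ => c :=
  ⟨.C c, by simp, by simp⟩

theorem coord (i : ι) : IsPolynomialOn Q 1 fun x => x i :=
  ⟨.X i, by simp, by simp⟩

theorem congr (hh : IsPolynomialOn Q D h) (heq : ∀ x ∈ Q, h' x = h x) : IsPolynomialOn Q D h' :=
  let ⟨P, hP, hev⟩ := hh
  ⟨P, hP, fun x hx => (heq x hx).trans (hev x hx)⟩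

theorem mono (hh : IsPolynomialOn Q D h) (hD : D ≤ D') : IsPolynomialOn Q D' h :=
  let ⟨P, hP, hev⟩ := hh
  ⟨P, hP.trans hD, hev⟩

theorem add (hh : IsPolynomialOn Q D h) (hh' : IsPolynomialOn Q D h') :
    IsPolynomialOn Q D fun x => h x + h' x :=
  let ⟨P, hP, hev⟩ := hh
  let ⟨P', hP', hev'⟩ := hh'
  ⟨P + P', (P.totalDegree_add P').trans (max_le hP hP'), fun x hx => by simp [hev x hx, hev' x hx]⟩

theorem mul (hh : IsPolynomialOn Q D h) (hh' : IsPolynomialOn Q D' h') :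
    IsPolynomialOn Q (D + D') fun x => h x * h' x :=
  let ⟨P, hP, hev⟩ := hh
  let ⟨P', hP', hev'⟩ := hh'
  ⟨P * P', (P.totalDegree_mul P').trans (add_le_add hP hP'),
    fun x hx => by simp [hev x hx, hev' x hx]⟩

theorem const_mul (c : ℝ) (hh : IsPolynomialOn Q D h) : IsPolynomialOn Q D fun x => c * h x :=
  ((const (D := 0) c).mul hh).mono (zero_add D).le

theorem sub (hh : IsPolynomialOn Q D h) (hh' : IsPolynomialOn Q D h') :
    IsPolynomialOn Q D fun x => h x - h' x :=
  (hh.add (hh'.const_mul (-1))).congr fun x _ => by ring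

theorem sum {κ : Type*} (s : Finset κ) {g : κ → EuclideanSpace ℝ ι → ℝ}
    (hg : ∀ k ∈ s, IsPolynomialOn Q D (g k)) : IsPolynomialOn Q D fun x => ∑ k ∈ s, g k x := by
  classical
  induction s using Finset.induction_on with
  | empty => simpa using const 0
  | insert a s ha ih =>
    simp only [Finset.sum_insert ha]
    exact (hg a (by simp)).add (ih fun k hk => hg k (by simp [hk]))

theorem prod {κ : Type*} (s : Finset κ) {g : κ → EuclideanSpace ℝ ι → ℝ}
    (hg : ∀ k ∈ s, IsPolynomialOn Q D (g k)) :
    IsPolynomialOn Q (s.card * D) fun x => ∏ k ∈ s, g k x := by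
  classical
  induction s using Finset.induction_on with
  | empty => simpa using const 1
  | insert a s ha ih =>
    simp only [Finset.prod_insert ha]
    refine ((hg a (by simp)).mul (ih fun k hk => hg k (by simp [hk]))).mono (le_of_eq ?_)
    rw [Finset.card_insert_of_notMem ha]
    ring

theorem det {n : Type*} [Fintype n] [DecidableEq n] {M : EuclideanSpace ℝ ι → Matrix n n ℝ}
    (hM : ∀ i j, IsPolynomialOn Q D fun x => M x i j) :
    IsPolynomialOn Q (Fintype.card n * D) fun x => (M x).det := by
  simp only [Matrix.det_apply']
  exact sum _ fun σ _ => const_mul _ (prod Finset.univ fun i _ => hM (σ i) i)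

theorem continuousLinearMap [Finite ι] (L : EuclideanSpace ℝ ι →L[ℝ] ℝ) :
    IsPolynomialOn Q 1 L := by
  classical
  cases nonempty_fintype ι
  refine (sum Finset.univ fun i _ => (coord i).const_mul
    (L (EuclideanSpace.single i 1))).congr fun x _ => ?_
  conv_lhs => rw [← (EuclideanSpace.basisFun ι ℝ).sum_repr x]
  simp [mul_comm]

theorem max_zero (hh : IsPolynomialOn Q D h)
    (hsign : (∀ x ∈ Q, 0 ≤ h x) ∨ ∀ x ∈ Q, h x ≤ 0) :
    IsPolynomialOn Q D fun x => max (h x) 0 := by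
  rcases hsign with hpos | hneg
  · exact hh.congr fun x hx => max_eq_left (hpos x hx)
  · exact (const 0).congr fun x hx => max_eq_right (hneg x hx)

theorem cubicStep_comp (hh : IsPolynomialOn Q D h) {k : ℤ}
    (hk : ∀ x ∈ Q, h x ∈ Icc (k : ℝ) (k + 1)) :
    IsPolynomialOn Q (3 * D) fun x => cubicStep (h x) := by
  have hsign (c : ℤ) : (∀ x ∈ Q, 0 ≤ h x - c) ∨ ∀ x ∈ Q, h x - c ≤ 0 := by
    rcases le_or_gt c k with hc | hc
    · have : (c : ℝ) ≤ k := by exact_mod_cast hc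
      exact .inl fun x hx => by linarith [(hk x hx).1]
    · have : (k : ℝ) + 1 ≤ c := by exact_mod_cast hc
      exact .inr fun x hx => by linarith [(hk x hx).2]
  have h0 := hh.max_zero (by simpa using hsign 0)
  have h1 := (hh.sub (const 1)).max_zero (by simpa using hsign 1)
  refine (((h0.mul h0).mul ((const 3).sub (hh.const_mul 2))).add
    ((h1.mul h1).mul ((hh.const_mul 2).add (const 1)))).mono (by lia) |>.congr fun x _ => ?_
  rw [cubicStep, sq, sq]

theorem cubicBump_comp (hh : IsPolynomialOn Q D h) {k : ℤ}
    (hk : ∀ x ∈ Q, h x ∈ Icc (k : ℝ) (k + 1)) :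
    IsPolynomialOn Q (3 * D) fun x => cubicBump (h x) := by
  refine ((hh.add (const 1)).cubicStep_comp (k := k + 1) fun x hx => ?_).sub
    (hh.cubicStep_comp hk)
  obtain ⟨hlow, hupp⟩ := hk x hx
  push_cast
  exact ⟨by linarith, by linarith⟩

theorem fderiv_apply [Finite ι] (hh : IsPolynomialOn Q D h) (hQ : UniqueDiffOn ℝ Q)
    (hdiff : Differentiable ℝ h) (v : EuclideanSpace ℝ ι) :
    IsPolynomialOn Q D fun x => fderiv ℝ h x v := by
  cases nonempty_fintype ι
  obtain ⟨P, hP, hev⟩ := hh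
  have hpartial (i : ι) :
      IsPolynomialOn Q D fun x => MvPolynomial.eval x (MvPolynomial.pderiv i P) :=
    ⟨_, (totalDegree_pderiv_le i P).trans (Nat.sub_le_of_le_add (by lia)), fun _ _ => rfl⟩
  refine (sum Finset.univ fun i _ => (hpartial i).const_mul (v i)).congr fun x hx => ?_
  have hfderiv := (hasStrictFDerivAt_eval P x).hasFDerivAt.comp x
    (PiLp.continuousLinearEquiv 2 ℝ fun _ : ι => ℝ).hasFDerivAt
  rw [(hQ x hx).eq (hdiff x).hasFDerivAt.hasFDerivWithinAt
    (hfderiv.hasFDerivWithinAt.congr (fun y hy => hev y hy) (hev x hx))]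
  simp [mul_comm]

end IsPolynomialOn

end IsPolynomialOn

section Cube

variable {ι : Type*}

/-- The closed axis-parallel cube of side `s` with lowest corner `a`. -/
def cube (a : ι → ℝ) (s : ℝ) : Set (EuclideanSpace ℝ ι) :=
  {x | ∀ i, x i ∈ Icc (a i) (a i + s)}

theorem unitCube_eq_cube (d : ℕ) : unitCube d = cube 0 1 := by
  simp [unitCube, cube]

theorem convex_cube (a : ι → ℝ) (s : ℝ) : Convex ℝ (cube a s) :=
  fun _ hx _ hy _ _ hb hc hbc i => convex_Icc _ _ (hx i) (hy i) hb hc hbc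

theorem uniqueDiffOn_cube [Finite ι] (a : ι → ℝ) {s : ℝ} (hs : 0 < s) :
    UniqueDiffOn ℝ (cube a s) := by
  cases nonempty_fintype ι
  refine uniqueDiffOn_convex (convex_cube a s) ⟨WithLp.toLp 2 fun i => a i + s / 2, ?_⟩
  have hopen : IsOpen {x : EuclideanSpace ℝ ι | ∀ i, x i ∈ Ioo (a i) (a i + s)} := by
    rw [ofPred_forall]
    exact isOpen_iInter_of_finite fun i => isOpen_Ioo.preimage (by fun_prop)
  have hsub : {x : EuclideanSpace ℝ ι | ∀ i, x i ∈ Ioo (a i) (a i + s)} ⊆ cube a s :=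
    fun x hx i => Ioo_subset_Icc_self (hx i)
  refine interior_maximal hsub hopen fun i => ?_
  constructor <;> simp [hs]

theorem norm_le_sqrt_card_mul [Fintype ι] {x : EuclideanSpace ℝ ι} {r : ℝ} (hr : 0 ≤ r)
    (hx : ∀ i, |x i| ≤ r) : ‖x‖ ≤ √(Fintype.card ι) * r := by
  rw [EuclideanSpace.norm_eq, ← Real.sqrt_sq hr, ← Real.sqrt_mul (by positivity)]
  refine Real.sqrt_le_sqrt ((Finset.sum_le_sum fun i _ => pow_le_pow_left₀ (norm_nonneg _)
    (hx i) 2).trans_eq ?_)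
  simp

theorem norm_sub_le_of_mem_cube [Fintype ι] {a : ι → ℝ} {s : ℝ} {x y : EuclideanSpace ℝ ι}
    (hx : x ∈ cube a s) (hy : y ∈ cube a s) : ‖x - y‖ ≤ √(Fintype.card ι) * s := by
  rcases isEmpty_or_nonempty ι with _ | ⟨⟨i⟩⟩
  · simp [Subsingleton.elim x y]
  · refine norm_le_sqrt_card_mul (by linarith [(hx i).1, (hx i).2]) fun j => ?_
    have h := abs_sub_le_of_le_of_le (hx j).1 (hx j).2 (hy j).1 (hy j).2
    simpa using h

theorem exists_hausdorffMeasure_cube_inter_zeros_le (n D : ℕ) :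
    ∃ C : NNReal, ∀ (a : Fin (n + 1) → ℝ) (s : ℝ) (h : E (n + 1) → ℝ),
      IsPolynomialOn (cube a s) D h → (∃ x ∈ cube a s, h x ≠ 0) →
      μH[n] (cube a s ∩ {x | h x = 0}) ≤ C * ENNReal.ofReal s ^ n := by
  have hlip := PiLp.lipschitzWith_toLp 2 fun _ : Fin (n + 1) => ℝ
  set L : NNReal := _ ^ (1 / (2 : ℝ≥0∞)).toReal
  refine ⟨L ^ n * ((n + 1) * (2 * n + 1) ^ n * D ^ 2), ?_⟩
  rintro a s h ⟨P, hP, hev⟩ ⟨p, hp, hp0⟩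
  have hP0 : P ≠ 0 := by
    rintro rfl
    exact hp0 (by simp [hev p hp])
  have hsub : cube a s ∩ {x | h x = 0} ⊆
      WithLp.toLp 2 '' (Icc a (fun j => a j + s) ∩ {x | MvPolynomial.eval x P = 0}) :=
    fun x ⟨hx, hx0⟩ => ⟨x, ⟨⟨fun i => (hx i).1, fun i => (hx i).2⟩, (hev x hx).symm.trans hx0⟩, rfl⟩
  calc μH[n] (cube a s ∩ {x | h x = 0})
      ≤ (L : ℝ≥0∞) ^ (n : ℝ) *
          μH[n] (Icc a (fun j => a j + s) ∩ {x | MvPolynomial.eval x P = 0}) :=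
        (measure_mono hsub).trans (hlip.hausdorffMeasure_image_le n.cast_nonneg _)
    _ ≤ (L : ℝ≥0∞) ^ (n : ℝ) *
          ((n + 1) * (2 * n + 1) ^ n * P.totalDegree ^ 2 * ENNReal.ofReal s ^ n) := by
        gcongr
        exact hausdorffMeasure_Icc_inter_zeros_le hP0 a s
    _ ≤ (L : ℝ≥0∞) ^ (n : ℝ) * ((n + 1) * (2 * n + 1) ^ n * D ^ 2 * ENNReal.ofReal s ^ n) := by
        gcongr
    _ = (L ^ n * ((n + 1) * (2 * n + 1) ^ n * D ^ 2) : NNReal) * ENNReal.ofReal s ^ n := by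
        rw [ENNReal.rpow_natCast]
        push_cast
        ring

end Cube

section GridCell

variable {d : ℕ}

/-- The cell with multi-index `k` of the grid cutting the unit cube into `N ^ d` cubes of side
`1 / N`. -/
def gridCell (N : ℕ) (k : Fin d → Fin N) : Set (E d) :=
  cube (fun i => (k i : ℝ) / N) (1 / N)

theorem mul_mem_Icc_of_mem_gridCell {N : ℕ} {k : Fin d → Fin N} {x : E d}
    (hx : x ∈ gridCell N k) (i : Fin d) : N * x i ∈ Icc (k i : ℝ) (k i + 1) := by
  have hN : (0 : ℝ) < N := by exact_mod_cast (k i).pos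
  obtain ⟨hlow, hupp⟩ := hx i
  rw [← add_div, le_div_iff₀' hN] at hupp
  exact ⟨(div_le_iff₀' hN).1 hlow, hupp⟩

theorem openCube_subset_iUnion_gridCell {N : ℕ} (hN : 0 < N) :
    openCube d ⊆ ⋃ k : Fin d → Fin N, gridCell N k := by
  intro x hx
  have hN' : (0 : ℝ) < N := by exact_mod_cast hN
  have hpos (i : Fin d) : 0 ≤ N * x i := mul_nonneg hN'.le (hx i).1.le
  have hfloor (i : Fin d) : ⌊N * x i⌋₊ < N :=
    (Nat.floor_lt (hpos i)).2 (mul_lt_of_lt_one_right hN' (hx i).2)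
  refine mem_iUnion.2 ⟨fun i => ⟨⌊N * x i⌋₊, hfloor i⟩, fun i => ⟨?_, ?_⟩⟩
  · exact (div_le_iff₀' hN').2 (Nat.floor_le (hpos i))
  · rw [← add_div, le_div_iff₀' hN']
    exact (Nat.lt_floor_add_one _).le

theorem exists_hausdorffMeasure_openCube_inter_zeros_le (n D : ℕ) :
    ∃ C : NNReal, ∀ N : ℕ, 0 < N → ∀ h : E (n + 1) → ℝ,
      (∀ k, IsPolynomialOn (gridCell N k) D h) → (∀ k, ∃ x ∈ gridCell N k, h x ≠ 0) →
      μH[n] (openCube (n + 1) ∩ {x | h x = 0}) ≤ C * N := by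
  obtain ⟨C, hC⟩ := exists_hausdorffMeasure_cube_inter_zeros_le n D
  refine ⟨C, fun N hN h hpoly hne => ?_⟩
  have hside : (N : ℝ≥0∞) ^ n * ENNReal.ofReal (1 / N) ^ n = 1 := by
    rw [← mul_pow, ← ENNReal.ofReal_natCast, ← ENNReal.ofReal_mul (by positivity),
      mul_one_div_cancel (by positivity), ENNReal.ofReal_one, one_pow]
  calc μH[n] (openCube (n + 1) ∩ {x | h x = 0})
      ≤ μH[n] (⋃ k, gridCell N k ∩ {x | h x = 0}) := by
        rw [← iUnion_inter]
        gcongr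
        exact openCube_subset_iUnion_gridCell hN
    _ ≤ ∑ _k : Fin (n + 1) → Fin N, C * ENNReal.ofReal (1 / N) ^ n :=
        (measure_iUnion_fintype_le _ _).trans
          (Finset.sum_le_sum fun k _ => hC _ _ h (hpoly k) (hne k))
    _ = C * N * (N ^ n * ENNReal.ofReal (1 / N) ^ n) := by
        simp only [Finset.sum_const, Finset.card_univ, Fintype.card_pi_const, Fintype.card_fin,
          nsmul_eq_mul]
        push_cast
        ring
    _ = C * N := by rw [hside, mul_one]

end GridCell

section TaylorPolynomial

variable {V F : Type*} [NormedAddCommGroup V] [NormedSpace ℝ V] [NormedAddCommGroup F]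
  [NormedSpace ℝ F]

/-- The first-order Taylor polynomial of `f` at `p`, evaluated at `x`. -/
noncomputable def taylorAt (f : V → F) (p x : V) : F :=
  f p + fderiv ℝ f p (x - p)

theorem hasFDerivAt_taylorAt (f : V → F) (p x : V) :
    HasFDerivAt (taylorAt f p) (fderiv ℝ f p) x :=
  ((fderiv ℝ f p).hasFDerivAt.comp x ((hasFDerivAt_id x).sub_const p)).const_add (f p)

theorem contDiff_taylorAt (f : V → F) (p : V) : ContDiff ℝ 1 (taylorAt f p) :=
  contDiff_const.add ((fderiv ℝ f p).contDiff.comp (contDiff_id.sub contDiff_const))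

/-- On `s`, the derivative of `f` changes by at most `η` between points at distance at most `r`. -/
def DerivOscLE (f : V → F) (s : Set V) (r η : ℝ) : Prop :=
  ∀ x ∈ s, ∀ y ∈ s, ‖x - y‖ ≤ r → ‖fderiv ℝ f x - fderiv ℝ f y‖ ≤ η

theorem norm_sub_taylorAt_le {f : V → F} {s : Set V} {r η : ℝ} (hs : Convex ℝ s)
    (hf : ∀ x ∈ s, DifferentiableAt ℝ f x) (hosc : DerivOscLE f s r η) {p x : V} (hp : p ∈ s)
    (hx : x ∈ s) (hr : ‖x - p‖ ≤ r) : ‖f x - taylorAt f p x‖ ≤ η * r := by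
  have hr0 : 0 ≤ r := (norm_nonneg _).trans hr
  have hη : 0 ≤ η := (norm_nonneg _).trans (hosc p hp p hp (by simpa using hr0))
  have hmem {y : V} (hy : y ∈ Metric.closedBall p r) : ‖y - p‖ ≤ r := mem_closedBall_iff_norm.1 hy
  have h := (hs.inter (convex_closedBall p r)).norm_image_sub_le_of_norm_hasFDerivWithin_le'
    (fun y hy => (hf y hy.1).hasFDerivAt.hasFDerivWithinAt)
    (fun y hy => hosc y hy.1 p hp (hmem hy.2)) ⟨hp, Metric.mem_closedBall_self hr0⟩
    ⟨hx, mem_closedBall_iff_norm.2 hr⟩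
  rw [taylorAt, ← sub_sub]
  exact h.trans (by gcongr)

end TaylorPolynomial

section GridBump

variable {d N : ℕ}

/-- The grid point `k / N` of the unit cube. -/
noncomputable def gridPoint (N : ℕ) (k : Fin d → Fin (N + 1)) : E d :=
  WithLp.toLp 2 fun i => (k i : ℝ) / N

/-- The tensor product bump around the grid point `k / N`; these bumps form a `C¹` partition of
unity on the unit cube. -/
def gridBump (N : ℕ) (k : Fin d → Fin (N + 1)) (x : E d) : ℝ :=
  ∏ i, cubicBump (N * x i - k i)

theorem gridPoint_mem_unitCube (k : Fin d → Fin (N + 1)) : gridPoint N k ∈ unitCube d :=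
  fun i => ⟨by simp only [gridPoint]; positivity,
    div_le_one_of_le₀ (by exact_mod_cast (k i).is_le) N.cast_nonneg⟩

theorem contDiff_gridBump (k : Fin d → Fin (N + 1)) : ContDiff ℝ 1 (gridBump N k) :=
  contDiff_prod fun i _ => contDiff_cubicBump.comp (by fun_prop)

theorem gridBump_nonneg (k : Fin d → Fin (N + 1)) (x : E d) : 0 ≤ gridBump N k x :=
  Finset.prod_nonneg fun _ _ => cubicBump_nonneg _

theorem sum_gridBump {x : E d} (hx : x ∈ unitCube d) :
    ∑ k : Fin d → Fin (N + 1), gridBump N k x = 1 := by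
  have hcoord (i : Fin d) : ∑ j : Fin (N + 1), cubicBump (N * x i - j) = 1 :=
    sum_cubicBump_sub ⟨mul_nonneg N.cast_nonneg (hx i).1,
      mul_le_of_le_one_right N.cast_nonneg (hx i).2⟩
  calc ∑ k : Fin d → Fin (N + 1), gridBump N k x
      = ∏ i, ∑ j : Fin (N + 1), cubicBump (N * x i - j) := by
        rw [Finset.prod_univ_sum, Fintype.piFinset_univ]
        rfl
    _ = 1 := Finset.prod_eq_one fun i _ => hcoord i

theorem abs_lt_one_of_gridBump_ne_zero {k : Fin d → Fin (N + 1)} {x : E d}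
    (hk : gridBump N k x ≠ 0) (i : Fin d) : |N * x i - k i| < 1 := by
  by_contra! h
  exact hk (Finset.prod_eq_zero (Finset.mem_univ i) (cubicBump_of_one_le_abs h))

theorem norm_sub_gridPoint_le (hN : 0 < N) {k : Fin d → Fin (N + 1)} {x : E d}
    (hk : gridBump N k x ≠ 0) : ‖x - gridPoint N k‖ ≤ √d / N := by
  have hN' : (0 : ℝ) < N := by exact_mod_cast hN
  have hcoord (i : Fin d) : |(x - gridPoint N k) i| ≤ 1 / N := by
    rw [le_div_iff₀' hN', ← abs_of_pos hN', ← abs_mul]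
    refine (abs_lt_one_of_gridBump_ne_zero hk i).le.trans_eq' ?_
    simp only [gridPoint, PiLp.sub_apply]
    congr 1
    field_simp
  refine (norm_le_sqrt_card_mul (by positivity) hcoord).trans_eq ?_
  rw [Fintype.card_fin, mul_one_div]

theorem card_gridBump_ne_zero_le (x : E d) :
    (Finset.univ.filter fun k : Fin d → Fin (N + 1) => gridBump N k x ≠ 0).card ≤ 2 ^ d := by
  have hsub : (Finset.univ.filter fun k : Fin d → Fin (N + 1) => gridBump N k x ≠ 0) ⊆
      Fintype.piFinset fun i => Finset.univ.filter fun j : Fin (N + 1) => |N * x i - j| < 1 :=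
    fun k hk => by
      simpa using abs_lt_one_of_gridBump_ne_zero (Finset.mem_filter.1 hk).2
  have hcoord (t : ℝ) : (Finset.univ.filter fun j : Fin (N + 1) => |t - j| < 1).card ≤ 2 := by
    refine (Finset.card_le_card_of_injOn (t := {⌊t⌋, ⌊t⌋ + 1})
      (fun j : Fin (N + 1) => ((j : ℕ) : ℤ)) (fun j hj => ?_)
      (Nat.cast_injective.comp Fin.val_injective).injOn).trans Finset.card_le_two
    obtain ⟨hlt, hgt⟩ := abs_lt.1 (Finset.mem_filter.1 hj).2
    have hupper : (j : ℤ) - 1 ≤ ⌊t⌋ := Int.le_floor.2 (by push_cast; linarith)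
    have hlower : ⌊t⌋ < (j : ℤ) + 1 := Int.floor_lt.2 (by push_cast; linarith)
    simp only [Finset.coe_insert, Finset.coe_singleton, mem_insert_iff, mem_singleton_iff]
    omega
  calc _ ≤ ∏ i : Fin d, _ := (Finset.card_le_card hsub).trans_eq (Fintype.card_piFinset _)
    _ ≤ ∏ _i : Fin d, 2 := Finset.prod_le_prod' fun i _ => hcoord _
    _ = 2 ^ d := by simp

theorem fderiv_gridBump_eq_zero {k : Fin d → Fin (N + 1)} {x : E d} (hk : gridBump N k x = 0) :
    fderiv ℝ (gridBump N k) x = 0 :=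
  IsLocalMin.fderiv_eq_zero (.of_forall fun y => hk.trans_le (gridBump_nonneg k y))

theorem sum_fderiv_gridBump {x : E d} (hx : x ∈ unitCube d) :
    ∑ k : Fin d → Fin (N + 1), fderiv ℝ (gridBump N k) x = 0 := by
  have hunique : UniqueDiffOn ℝ (unitCube d) :=
    unitCube_eq_cube d ▸ uniqueDiffOn_cube 0 one_pos
  refine (hunique x hx).eq (f := fun _ => (1 : ℝ)) ?_ (hasFDerivWithinAt_const 1 x _)
  refine (HasFDerivWithinAt.fun_sum fun k _ => ((contDiff_gridBump k).differentiable
    one_ne_zero x).hasFDerivAt.hasFDerivWithinAt).congr (fun y hy => ?_) ?_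
  exacts [(sum_gridBump hy).symm, (sum_gridBump hx).symm]

theorem norm_fderiv_gridBump_le (k : Fin d → Fin (N + 1)) (x : E d) :
    ‖fderiv ℝ (gridBump N k) x‖ ≤ 2 * d * N := by
  have hfactor (i : Fin d) : HasFDerivAt (fun y : E d => cubicBump (N * y i - k i))
      (deriv cubicBump (N * x i - k i) • (N : ℝ) • EuclideanSpace.proj (𝕜 := ℝ) i) x :=
    (contDiff_cubicBump.differentiable one_ne_zero _).hasDerivAt.comp_hasFDerivAt x
      (((EuclideanSpace.proj (𝕜 := ℝ) i).hasFDerivAt.const_mul (N : ℝ)).sub_const _)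
  have hterm (i : Fin d) : ‖(∏ j ∈ Finset.univ.erase i, cubicBump (N * x j - k j)) •
      deriv cubicBump (N * x i - k i) • (N : ℝ) •
        (EuclideanSpace.proj i : E d →L[ℝ] ℝ)‖ ≤ 2 * N := by
    have hprod : |∏ j ∈ Finset.univ.erase i, cubicBump (N * x j - k j)| ≤ 1 := by
      rw [abs_of_nonneg (Finset.prod_nonneg fun _ _ => cubicBump_nonneg _)]
      exact Finset.prod_le_one (fun _ _ => cubicBump_nonneg _) fun _ _ => cubicBump_le_one _
    have hproj : ‖(EuclideanSpace.proj i : E d →L[ℝ] ℝ)‖ ≤ 1 :=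
      ContinuousLinearMap.opNorm_le_bound _ zero_le_one fun y =>
        (PiLp.norm_apply_le y i).trans_eq (one_mul _).symm
    rw [norm_smul, norm_smul, norm_smul, Real.norm_eq_abs, Real.norm_eq_abs, Real.norm_natCast]
    calc _ ≤ 1 * (2 * (N * 1) : ℝ) := by
          gcongr
          exact abs_deriv_cubicBump_le _
      _ = 2 * N := by ring
  rw [show gridBump N k = fun y => ∏ i, cubicBump (N * y i - k i) from rfl,
    (HasFDerivAt.finsetProd fun i _ => hfactor i).fderiv]
  refine (norm_sum_le_of_le _ fun i _ => hterm i).trans_eq ?_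
  simp only [Finset.sum_const, Finset.card_univ, Fintype.card_fin, nsmul_eq_mul]
  ring

end GridBump

section Spline

variable {d m N : ℕ} {F : Type*} [NormedAddCommGroup F] [NormedSpace ℝ F] {f : E d → F} {η : ℝ}
  {x : E d}

/-- The piecewise polynomial `C¹` approximation of `f` on the unit cube obtained by blending the
Taylor polynomials of `f` at the grid points of mesh `1 / N`. -/
noncomputable def spline (f : E d → F) (N : ℕ) (x : E d) : F :=
  ∑ k : Fin d → Fin (N + 1), gridBump N k x • taylorAt f (gridPoint N k) x

/-- The factor by which the spline approximation magnifies the oscillation of the derivative. -/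
noncomputable def splineConst (d : ℕ) : ℝ :=
  1 + 2 ^ d * (2 * d * √d)

theorem splineConst_pos (d : ℕ) : 0 < splineConst d := by
  unfold splineConst
  positivity

theorem sqrt_le_splineConst (d : ℕ) : √d ≤ splineConst d := by
  rcases d.eq_zero_or_pos with rfl | hd
  · simp [splineConst]
  · have hd' : (1 : ℝ) ≤ d := by exact_mod_cast hd
    have hpow : (1 : ℝ) ≤ 2 ^ d := one_le_pow₀ one_le_two
    calc √d = 1 * (1 * √d) := by ring
      _ ≤ 2 ^ d * (2 * d * √d) := by gcongr; linarith
      _ ≤ splineConst d := le_add_of_nonneg_left zero_le_one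

theorem contDiff_spline (f : E d → F) (N : ℕ) : ContDiff ℝ 1 (spline f N) :=
  ContDiff.sum fun k _ => (contDiff_gridBump k).smul (contDiff_taylorAt f _)

theorem fderiv_spline (f : E d → F) (N : ℕ) (x : E d) :
    fderiv ℝ (spline f N) x = ∑ k : Fin d → Fin (N + 1),
      (gridBump N k x • fderiv ℝ f (gridPoint N k) +
        (fderiv ℝ (gridBump N k) x).smulRight (taylorAt f (gridPoint N k) x)) :=
  (HasFDerivAt.fun_sum fun k _ => ((contDiff_gridBump k).differentiable one_ne_zero
    x).hasFDerivAt.smul (hasFDerivAt_taylorAt f (gridPoint N k) x)).fderiv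

theorem norm_sum_gridBump_smul_le (hx : x ∈ unitCube d) {v : (Fin d → Fin (N + 1)) → F} {M : ℝ}
    (hv : ∀ k, gridBump N k x ≠ 0 → ‖v k‖ ≤ M) : ‖∑ k, gridBump N k x • v k‖ ≤ M := by
  have h := (convex_closedBall (0 : F) M).finsum_mem (fun k => gridBump_nonneg k x)
    (by rw [finsum_eq_sum_of_fintype, sum_gridBump hx])
    fun k hk => mem_closedBall_zero_iff.2 (hv k hk)
  rwa [finsum_eq_sum_of_fintype, mem_closedBall_zero_iff] at h

theorem norm_sum_fderiv_gridBump_smulRight_le {v : (Fin d → Fin (N + 1)) → F} {M : ℝ}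
    (hM : 0 ≤ M) (hv : ∀ k, gridBump N k x ≠ 0 → ‖v k‖ ≤ M) :
    ‖∑ k, (fderiv ℝ (gridBump N k) x).smulRight (v k)‖ ≤ 2 ^ d * (2 * d * N * M) := by
  rw [← Finset.sum_filter_of_ne (p := fun k => gridBump N k x ≠ 0) fun k _ hk h0 =>
    hk (by rw [fderiv_gridBump_eq_zero h0, ContinuousLinearMap.zero_smulRight])]
  refine (norm_sum_le_of_le (n := fun _ => 2 * d * N * M) _ fun k hk => ?_).trans ?_
  · rw [ContinuousLinearMap.norm_smulRight_apply]
    exact mul_le_mul (norm_fderiv_gridBump_le k x) (hv k (Finset.mem_filter.1 hk).2)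
      (norm_nonneg _) (by positivity)
  · rw [Finset.sum_const, nsmul_eq_mul]
    gcongr
    exact_mod_cast card_gridBump_ne_zero_le x

theorem norm_taylorAt_gridPoint_sub_le (hN : 0 < N)
    (hf : ∀ x ∈ unitCube d, DifferentiableAt ℝ f x) (hosc : DerivOscLE f (unitCube d) (√d / N) η)
    (hx : x ∈ unitCube d) {k : Fin d → Fin (N + 1)} (hk : gridBump N k x ≠ 0) :
    ‖taylorAt f (gridPoint N k) x - f x‖ ≤ η * (√d / N) := by
  rw [norm_sub_rev]
  exact norm_sub_taylorAt_le (unitCube_eq_cube d ▸ convex_cube 0 1) hf hosc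
    (gridPoint_mem_unitCube k) hx (norm_sub_gridPoint_le hN hk)

theorem norm_spline_sub_le (hN : 0 < N) (hf : ∀ x ∈ unitCube d, DifferentiableAt ℝ f x)
    (hosc : DerivOscLE f (unitCube d) (√d / N) η) (hx : x ∈ unitCube d) :
    ‖spline f N x - f x‖ ≤ η * (√d / N) := by
  have heq : spline f N x - f x =
      ∑ k, gridBump N k x • (taylorAt f (gridPoint N k) x - f x) := by
    simp only [smul_sub, Finset.sum_sub_distrib, ← Finset.sum_smul, sum_gridBump hx, one_smul,
      spline]
  rw [heq]
  exact norm_sum_gridBump_smul_le hx fun k hk => norm_taylorAt_gridPoint_sub_le hN hf hosc hx hk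

theorem norm_fderiv_spline_sub_le (hN : 0 < N) (hf : ∀ x ∈ unitCube d, DifferentiableAt ℝ f x)
    (hosc : DerivOscLE f (unitCube d) (√d / N) η) (hx : x ∈ unitCube d) :
    ‖fderiv ℝ (spline f N) x - fderiv ℝ f x‖ ≤ splineConst d * η := by
  have hη : 0 ≤ η := (norm_nonneg _).trans (hosc x hx x hx
    (by rw [sub_self, norm_zero]; positivity))
  -- The bumps sum to `1` and their derivatives to `0`, so `f x` and `Df x` can be subtracted
  -- inside the sum.
  have heq : fderiv ℝ (spline f N) x - fderiv ℝ f x =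
      ∑ k, gridBump N k x • (fderiv ℝ f (gridPoint N k) - fderiv ℝ f x) +
      ∑ k, (fderiv ℝ (gridBump N k) x).smulRight (taylorAt f (gridPoint N k) x - f x) := by
    have hzero (y : E d) : ∑ k : Fin d → Fin (N + 1), fderiv ℝ (gridBump N k) x y = 0 := by
      simpa using congrArg (· y) (sum_fderiv_gridBump (N := N) hx)
    ext1 y
    simp only [fderiv_spline, Finset.sum_add_distrib, sub_apply, add_apply, sum_apply, smul_apply,
      ContinuousLinearMap.smulRight_apply, smul_sub, Finset.sum_sub_distrib, ← Finset.sum_smul,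
      sum_gridBump hx, one_smul, hzero, zero_smul, sub_zero]
    abel
  have hN' : (N : ℝ) ≠ 0 := by exact_mod_cast hN.ne'
  rw [heq]
  calc _ ≤ η + 2 ^ d * (2 * d * N * (η * (√d / N))) :=
        (norm_add_le _ _).trans (add_le_add
          (norm_sum_gridBump_smul_le hx fun k hk => hosc _ (gridPoint_mem_unitCube k) x hx
            ((norm_sub_rev _ _).trans_le (norm_sub_gridPoint_le hN hk)))
          (norm_sum_fderiv_gridBump_smulRight_le (by positivity) fun k hk =>
            norm_taylorAt_gridPoint_sub_le hN hf hosc hx hk))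
    _ = splineConst d * η := by
        rw [splineConst]
        field_simp

theorem isPolynomialOn_gridBump (k : Fin d → Fin (N + 1)) (c : Fin d → Fin N) :
    IsPolynomialOn (gridCell N c) (3 * d) (gridBump N k) := by
  have hfactor (i : Fin d) : IsPolynomialOn (gridCell N c) 3
      fun x => cubicBump (N * x i - k i) := by
    refine (((IsPolynomialOn.coord i).const_mul N).sub (.const (k i))).cubicBump_comp
      (k := c i - k i) fun x hx => ?_
    obtain ⟨hlow, hupp⟩ := mul_mem_Icc_of_mem_gridCell hx i
    push_cast
    constructor <;> linarith
  refine (IsPolynomialOn.prod Finset.univ fun i _ => hfactor i).mono ?_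
  rw [Finset.card_fin, mul_comm]

theorem isPolynomialOn_taylorAt_apply (Q : Set (E d)) (f : E d → E m) (p : E d) (i : Fin m) :
    IsPolynomialOn Q 1 fun x => taylorAt f p x i :=
  ((IsPolynomialOn.const (f p i - fderiv ℝ f p p i)).add (.continuousLinearMap
    ((EuclideanSpace.proj i).comp (fderiv ℝ f p)))).congr fun x _ => by
    simp only [taylorAt, map_sub, PiLp.add_apply, PiLp.sub_apply,
      ContinuousLinearMap.comp_apply, PiLp.proj_apply]
    ring

theorem isPolynomialOn_spline_apply (f : E d → E m) (c : Fin d → Fin N) (i : Fin m) :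
    IsPolynomialOn (gridCell N c) (3 * d + 1) fun x => spline f N x i :=
  (IsPolynomialOn.sum Finset.univ fun k _ => (isPolynomialOn_gridBump k c).mul
    (isPolynomialOn_taylorAt_apply _ f (gridPoint N k) i)).congr fun x _ => by simp [spline]

end Spline

section CriticalSet

variable {d m p : ℕ}

theorem mem_critSet_iff (hm : 1 ≤ m) {g : E d → E m} {x : E d} :
    x ∈ critSet g ↔ x ∈ openCube d ∧ ¬Function.Surjective (fderiv ℝ g x) := by
  have hjac : jac g x = LinearMap.toMatrix (EuclideanSpace.basisFun (Fin d) ℝ).toBasis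
      (EuclideanSpace.basisFun (Fin m) ℝ).toBasis (fderiv ℝ g x : E d →ₗ[ℝ] E m) := by
    ext i j
    simp [jac, LinearMap.toMatrix_apply]
  have hrank : (jac g x).rank =
      Module.finrank ℝ (LinearMap.range (fderiv ℝ g x : E d →ₗ[ℝ] E m)) := by
    rw [Matrix.rank_eq_finrank_range_toLin _ (EuclideanSpace.basisFun (Fin m) ℝ).toBasis
      (EuclideanSpace.basisFun (Fin d) ℝ).toBasis, hjac, Matrix.toLin_toMatrix]
  refine and_congr_right fun _ => ?_
  rw [hrank, Nat.le_sub_one_iff_lt hm, ← ContinuousLinearMap.coe_coe, ← LinearMap.range_eq_top]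
  refine ⟨fun hlt htop => ?_, fun hne => ?_⟩
  · rw [htop, finrank_top, finrank_euclideanSpace_fin] at hlt
    exact hlt.false
  · simpa using Submodule.finrank_lt hne

theorem critSet_subset_det_jac_eq_zero (hd : 1 ≤ d) (g : E d → E d) :
    critSet g ⊆ openCube d ∩ {x | (jac g x).det = 0} := by
  rintro x ⟨hx, hrank⟩
  refine ⟨hx, by_contra fun hdet => ?_⟩
  have hfull := Matrix.rank_of_isUnit _ ((Matrix.isUnit_iff_isUnit_det _).2 (Ne.isUnit hdet))
  rw [Fintype.card_fin] at hfull
  omega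

theorem critSet_comp_subset (hm : 1 ≤ m) (hp : 1 ≤ p) {g : E d → E p} (hg : Differentiable ℝ g)
    {L : E p →L[ℝ] E m} (hL : Function.Surjective L) : critSet (L ∘ g) ⊆ critSet g := by
  intro x hx
  obtain ⟨hcube, hnsurj⟩ := (mem_critSet_iff hm).1 hx
  refine (mem_critSet_iff hp).2 ⟨hcube, fun hsurj => hnsurj ?_⟩
  rw [(L.hasFDerivAt.comp x (hg x).hasFDerivAt).fderiv]
  exact hL.comp hsurj

theorem hasFDerivAt_add_smul_self {V : Type*} [NormedAddCommGroup V] [NormedSpace ℝ V]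
    {g : V → V} {x : V} (hg : DifferentiableAt ℝ g x) (t : ℝ) :
    HasFDerivAt (fun y => g y + t • y) (fderiv ℝ g x + t • .id ℝ V) x :=
  hg.hasFDerivAt.add ((hasFDerivAt_id x).const_smul t)

theorem jac_add_smul_self {g : E d → E d} {x : E d} (hg : DifferentiableAt ℝ g x) (t : ℝ) :
    jac (fun y => g y + t • y) x = jac g x + t • 1 := by
  ext i j
  simp [jac, (hasFDerivAt_add_smul_self hg t).fderiv, Matrix.one_apply]

theorem isPolynomialOn_det_jac {Q : Set (E d)} {D : ℕ} {g : E d → E d} (hg : Differentiable ℝ g)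
    (hQ : UniqueDiffOn ℝ Q) (hpoly : ∀ i, IsPolynomialOn Q D fun x => g x i) :
    IsPolynomialOn Q (d * D) fun x => (jac g x).det := by
  have hentry (i j : Fin d) : IsPolynomialOn Q D fun x => jac g x i j := by
    refine ((hpoly i).fderiv_apply hQ (by fun_prop) (EuclideanSpace.single j 1)).congr
      fun x _ => ?_
    have hcomp : HasFDerivAt (fun y => g y i) ((EuclideanSpace.proj i).comp (fderiv ℝ g x)) x :=
      (EuclideanSpace.proj i : E d →L[ℝ] ℝ).hasFDerivAt.comp x (hg x).hasFDerivAt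
    simp [jac, hcomp.fderiv]
  simpa using IsPolynomialOn.det hentry

end CriticalSet

section Perturbation

variable {d : ℕ} {κ : Type*} [Finite κ]

theorem exists_mem_forall_det_add_smul_one_ne_zero {K n : Type*} [Field K] [Fintype n]
    [DecidableEq n] (M : κ → Matrix n n K) {S : Set K} (hS : S.Infinite) :
    ∃ t ∈ S, ∀ k, (M k + t • 1).det ≠ 0 := by
  have hfinite : (⋃ k, {t | (-M k).charpoly.IsRoot t}).Finite :=
    finite_iUnion fun k => Polynomial.finite_setOfPred_isRoot (Matrix.charpoly_monic _).ne_zero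
  obtain ⟨t, htS, ht⟩ := hS.exists_notMem_finite hfinite
  refine ⟨t, htS, fun k hk => ht (mem_iUnion.2 ⟨k, ?_⟩)⟩
  rw [mem_ofPred_eq, Polynomial.IsRoot.def, Matrix.eval_charpoly, sub_neg_eq_add, add_comm,
    Matrix.scalar_apply, ← Matrix.smul_one_eq_diagonal, hk]

theorem Nf_le_hausdorffMeasure_critSet {m : ℕ} {f g : E d → E m} {ε : ℝ} (hg : ContDiff ℝ 1 g)
    (hclose : ∀ x ∈ unitCube d, ‖g x - f x‖ ≤ ε ∧ ‖fderiv ℝ g x - fderiv ℝ f x‖ ≤ ε) :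
    Nf f ε ≤ μH[(d : ℝ) - 1] (critSet g) :=
  sInf_le ⟨g, hg, hclose, rfl⟩

theorem exists_Nf_le_hausdorffMeasure_det_zeros (hd : 1 ≤ d) {f g : E d → E d}
    (hg : ContDiff ℝ 1 g) {δ ε : ℝ} (hδ : δ < ε)
    (hclose : ∀ x ∈ unitCube d, ‖g x - f x‖ ≤ δ ∧ ‖fderiv ℝ g x - fderiv ℝ f x‖ ≤ δ)
    (p : κ → E d) :
    ∃ t : ℝ, (∀ k, (jac (fun x => g x + t • x) (p k)).det ≠ 0) ∧
      Nf f ε ≤ μH[(d : ℝ) - 1] (openCube d ∩ {x | (jac (fun y => g y + t • y) x).det = 0}) := by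
  have hdiff := hg.differentiable one_ne_zero
  obtain ⟨t, ⟨ht0, ht⟩, hdet⟩ := exists_mem_forall_det_add_smul_one_ne_zero
    (fun k => jac g (p k)) (Ioo_infinite (show 0 < (ε - δ) / (1 + √d) by
      have := sub_pos.2 hδ
      positivity))
  rw [lt_div_iff₀ (by positivity), mul_one_add] at ht
  have htd : 0 ≤ t * √d := by positivity
  refine ⟨t, fun k => jac_add_smul_self (hdiff _) t ▸ hdet k, (Nf_le_hausdorffMeasure_critSet
    (g := fun x => g x + t • x)
    (hg.add (contDiff_id.const_smul t)) fun x hx => ?_).trans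
    (measure_mono (critSet_subset_det_jac_eq_zero hd _))⟩
  obtain ⟨hval, hderiv⟩ := hclose x hx
  constructor
  · have hnorm : ‖t • x‖ ≤ t * √d := by
      have hzero : (0 : E d) ∈ cube 0 1 := fun i => by simp
      have hx_le := norm_sub_le_of_mem_cube (unitCube_eq_cube d ▸ hx) hzero
      rw [sub_zero, mul_one, Fintype.card_fin] at hx_le
      rw [norm_smul, Real.norm_of_nonneg ht0.le]
      gcongr
    rw [add_sub_right_comm]
    linarith [norm_add_le (g x - f x) (t • x)]
  · have hnorm : ‖t • ContinuousLinearMap.id ℝ (E d)‖ ≤ t := by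
      rw [norm_smul, Real.norm_of_nonneg ht0.le]
      exact mul_le_of_le_one_right ht0.le ContinuousLinearMap.norm_id_le
    rw [(hasFDerivAt_add_smul_self (hdiff x) t).fderiv, add_sub_right_comm]
    linarith [norm_add_le (fderiv ℝ g x - fderiv ℝ f x) (t • ContinuousLinearMap.id ℝ (E d))]

end Perturbation

section UpperBounds

variable {d m p : ℕ}

theorem Nf_eq_zero_of_derivOscLE (hd : 1 ≤ d) {f : E d → E d}
    (hf : ∀ x ∈ unitCube d, DifferentiableAt ℝ f x) {η ε : ℝ}
    (hosc : DerivOscLE f (unitCube d) √d η) (hε : √d * η < ε) : Nf f ε = 0 := by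
  have hzero : (0 : E d) ∈ unitCube d := fun _ => by simp
  have hη : 0 ≤ η := (norm_nonneg _).trans (hosc 0 hzero 0 hzero (by simp))
  have hdist {x : E d} (hx : x ∈ unitCube d) : ‖x - 0‖ ≤ √d := by
    rw [unitCube_eq_cube] at hx hzero
    simpa using norm_sub_le_of_mem_cube hx hzero
  have hclose (x) (hx : x ∈ unitCube d) : ‖taylorAt f 0 x - f x‖ ≤ √d * η ∧
      ‖fderiv ℝ (taylorAt f 0) x - fderiv ℝ f x‖ ≤ √d * η := by
    rw [norm_sub_rev, (hasFDerivAt_taylorAt f 0 x).fderiv, norm_sub_rev (fderiv ℝ f 0), mul_comm]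
    refine ⟨norm_sub_taylorAt_le (unitCube_eq_cube d ▸ convex_cube 0 1) hf hosc hzero hx
      (hdist hx), (hosc x hx 0 hzero (hdist hx)).trans (le_mul_of_one_le_right hη ?_)⟩
    exact Real.one_le_sqrt.2 (by exact_mod_cast hd)
  obtain ⟨t, hdet, hNf⟩ := exists_Nf_le_hausdorffMeasure_det_zeros hd (contDiff_taylorAt f 0) hε
    hclose fun _ : Unit => 0
  have hjac (x : E d) : jac (fun y => taylorAt f 0 y + t • y) x =
      jac (fun y => taylorAt f 0 y + t • y) 0 := by
    rw [jac_add_smul_self (hasFDerivAt_taylorAt f 0 x).differentiableAt,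
      jac_add_smul_self (hasFDerivAt_taylorAt f 0 0).differentiableAt]
    simp only [jac, (hasFDerivAt_taylorAt f 0 _).fderiv]
  simpa [hjac, hdet ()] using hNf

theorem exists_Nf_le_of_derivOscLE_div (n : ℕ) :
    ∃ C : NNReal, ∀ f : E (n + 1) → E (n + 1),
      (∀ x ∈ unitCube (n + 1), DifferentiableAt ℝ f x) → ∀ N : ℕ, 0 < N → ∀ η ε : ℝ,
      DerivOscLE f (unitCube (n + 1)) (√(n + 1 : ℕ) / N) η → splineConst (n + 1) * η < ε →
      Nf f ε ≤ C * N := by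
  obtain ⟨C, hC⟩ := exists_hausdorffMeasure_openCube_inter_zeros_le n
    ((n + 1) * (3 * (n + 1) + 1))
  refine ⟨C, fun f hf N hN η ε hosc hε => ?_⟩
  have hN' : (1 : ℝ) ≤ N := by exact_mod_cast hN
  have hzero : (0 : E (n + 1)) ∈ unitCube (n + 1) := fun _ => by simp
  have hη : 0 ≤ η :=
    (norm_nonneg _).trans (hosc 0 hzero 0 hzero (by rw [sub_self, norm_zero]; positivity))
  have hclose (x) (hx : x ∈ unitCube (n + 1)) : ‖spline f N x - f x‖ ≤ splineConst (n + 1) * η ∧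
      ‖fderiv ℝ (spline f N) x - fderiv ℝ f x‖ ≤ splineConst (n + 1) * η := by
    refine ⟨(norm_spline_sub_le hN hf hosc hx).trans ?_, norm_fderiv_spline_sub_le hN hf hosc hx⟩
    rw [mul_comm]
    gcongr
    exact (div_le_self (Real.sqrt_nonneg _) hN').trans (sqrt_le_splineConst _)
  -- The perturbed Jacobian determinant is non-zero at a corner of every grid cell.
  obtain ⟨t, hdet, hNf⟩ := exists_Nf_le_hausdorffMeasure_det_zeros n.succ_pos
    (contDiff_spline f N) hε hclose
    fun k : Fin (n + 1) → Fin N => WithLp.toLp 2 fun i => (k i : ℝ) / N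
  have hdiff : Differentiable ℝ fun x => spline f N x + t • x :=
    ((contDiff_spline f N).differentiable one_ne_zero).add (differentiable_id.const_smul t)
  rw [Nat.cast_succ, add_sub_cancel_right] at hNf
  refine hNf.trans (hC N hN _ (fun k => isPolynomialOn_det_jac hdiff
    (uniqueDiffOn_cube _ (by positivity)) fun i => ?_) fun k => ⟨_, fun i => ?_, hdet k⟩)
  · exact (isPolynomialOn_spline_apply f k i).add
      (((IsPolynomialOn.coord i).const_mul t).mono (by omega))
  · exact left_mem_Icc.2 (le_add_of_nonneg_right (by positivity))

theorem exists_linearIsometry (h : m ≤ d) : Nonempty (E m →ₗᵢ[ℝ] E d) := by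
  let b := EuclideanSpace.basisFun (Fin m) ℝ
  let b' := EuclideanSpace.basisFun (Fin d) ℝ
  refine ⟨(b.toBasis.constr ℝ (b' ∘ Fin.castLE h)).isometryOfOrthonormal (v := b.toBasis)
    (by simp) ?_⟩
  rw [show b.toBasis.constr ℝ (b' ∘ Fin.castLE h) ∘ b.toBasis = b' ∘ Fin.castLE h from
    funext fun i => b.toBasis.constr_basis ℝ _ i]
  exact b'.orthonormal.comp _ (Fin.castLE_injective h)

theorem fderiv_linearIsometry_comp {V W U : Type*} [NormedAddCommGroup V] [NormedSpace ℝ V]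
    [NormedAddCommGroup W] [NormedSpace ℝ W] [NormedAddCommGroup U] [NormedSpace ℝ U]
    {f : V → W} {x : V} (hf : DifferentiableAt ℝ f x) (ι : W →ₗᵢ[ℝ] U) :
    fderiv ℝ (ι ∘ f) x = ι.toContinuousLinearMap.comp (fderiv ℝ f x) :=
  (ι.toContinuousLinearMap.hasFDerivAt.comp x hf.hasFDerivAt).fderiv

theorem Nf_le_Nf_linearIsometry_comp (hm : 1 ≤ m) {f : E d → E m}
    (hf : ∀ x ∈ unitCube d, DifferentiableAt ℝ f x) (ι : E m →ₗᵢ[ℝ] E p) (ε : ℝ) :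
    Nf f ε ≤ Nf (ι ∘ f) ε := by
  have hp : 1 ≤ p := hm.trans (by
    simpa using LinearMap.finrank_le_finrank_of_injective (f := ι.toLinearMap) ι.injective)
  set P := ContinuousLinearMap.adjoint ι.toContinuousLinearMap with hP
  have hPι (y : E m) : P (ι y) = y :=
    ext_inner_right ℝ fun z => by simp [hP, ContinuousLinearMap.adjoint_inner_left]
  have hPnorm : ‖P‖ ≤ 1 := by
    rw [hP, LinearIsometryEquiv.norm_map]
    exact ι.norm_toContinuousLinearMap_le
  refine le_sInf ?_
  rintro _ ⟨g, hg, hclose, rfl⟩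
  have hdiff := hg.differentiable one_ne_zero
  refine (Nf_le_hausdorffMeasure_critSet (P.contDiff.comp hg) fun x hx => ?_).trans
    (measure_mono (critSet_comp_subset hm hp hdiff fun y => ⟨ι y, hPι y⟩))
  obtain ⟨hval, hderiv⟩ := hclose x hx
  constructor
  · rw [Function.comp_apply, ← hPι (f x), ← map_sub]
    exact (P.le_of_opNorm_le hPnorm _).trans ((one_mul _).trans_le hval)
  · have hfderiv : fderiv ℝ f x = P.comp (fderiv ℝ (ι ∘ f) x) := by
      ext1 v
      rw [fderiv_linearIsometry_comp (hf x hx)]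
      exact (hPι _).symm
    rw [(P.hasFDerivAt.comp x (hdiff x).hasFDerivAt).fderiv, hfderiv,
      ← ContinuousLinearMap.comp_sub]
    exact (P.opNorm_comp_le _).trans
      ((mul_le_of_le_one_left (norm_nonneg _) hPnorm).trans hderiv)

end UpperBounds

section HoelderDerivative

variable {α : ℝ}

theorem derivOscLE_of_hoelder {V F : Type*} [NormedAddCommGroup V] [NormedSpace ℝ V]
    [NormedAddCommGroup F] [NormedSpace ℝ F] {f : V → F} {s : Set V} {H r : ℝ} (hα : 0 ≤ α)
    (hH : 0 ≤ H)
    (hhoelder : ∀ x ∈ s, ∀ y ∈ s, ‖fderiv ℝ f x - fderiv ℝ f y‖ ≤ H * ‖x - y‖ ^ α) :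
    DerivOscLE f s r (H * r ^ α) :=
  fun x hx y hy hxy => (hhoelder x hx y hy).trans (by gcongr)

theorem exists_nat_le_two_mul_rpow_and_le_rpow {b : ℝ} (hα : 0 < α) (hb : 1 ≤ b) :
    ∃ N : ℕ, 0 < N ∧ (N : ℝ) ≤ 2 * b ^ (1 / α) ∧ b ≤ (N : ℝ) ^ α := by
  have hroot : 1 ≤ b ^ (1 / α) := Real.one_le_rpow hb (by positivity)
  refine ⟨⌈b ^ (1 / α)⌉₊, Nat.ceil_pos.2 (zero_lt_one.trans_le hroot), ?_, ?_⟩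
  · linarith [Nat.ceil_lt_add_one (zero_le_one.trans hroot)]
  · calc b = (b ^ (1 / α)) ^ α := by rw [one_div, Real.rpow_inv_rpow (by positivity) hα.ne']
      _ ≤ (⌈b ^ (1 / α)⌉₊ : ℝ) ^ α := by
        gcongr
        exact Nat.le_ceil _

theorem exists_Nf_le_of_hoelder_square (n : ℕ) (hα : 0 < α) :
    ∃ C : ℝ, 0 < C ∧ ∀ f : E (n + 1) → E (n + 1),
      (∀ x ∈ unitCube (n + 1), DifferentiableAt ℝ f x) → ∀ H : ℝ, 0 ≤ H →
      (∀ x ∈ unitCube (n + 1), ∀ y ∈ unitCube (n + 1),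
        ‖fderiv ℝ f x - fderiv ℝ f y‖ ≤ H * ‖x - y‖ ^ α) →
      ∀ ε : ℝ, 0 < ε → Nf f ε ≤ ENNReal.ofReal (C * (H / ε) ^ (1 / α)) := by
  obtain ⟨C₁, hC₁⟩ := exists_Nf_le_of_derivOscLE_div n
  set K := splineConst (n + 1)
  have hK : 0 < K := splineConst_pos (n + 1)
  set R : ℝ := √(n + 1 : ℕ) ^ α
  refine ⟨2 * (C₁ + 1) * (2 * K * R) ^ (1 / α), by positivity, fun f hf H hH hhoelder ε hε => ?_⟩
  have hosc (r : ℝ) : DerivOscLE f (unitCube (n + 1)) r (H * r ^ α) :=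
    derivOscLE_of_hoelder hα.le hH hhoelder
  rcases lt_or_ge (2 * K * R * H) ε with hlarge | hsmall
  · rw [Nf_eq_zero_of_derivOscLE n.succ_pos hf (hosc _)]
    · exact zero_le
    · calc √(n + 1 : ℕ) * (H * R) ≤ K * (H * R) := by gcongr; exact sqrt_le_splineConst _
        _ ≤ 2 * K * R * H := by nlinarith [show 0 ≤ K * (H * R) by positivity]
        _ < ε := hlarge
  obtain ⟨N, hN, hN_le, hle_N⟩ := exists_nat_le_two_mul_rpow_and_le_rpow hα
    ((one_le_div hε).2 hsmall)
  have hN' : (0 : ℝ) < N := by exact_mod_cast hN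
  have hmesh : K * (H * (√(n + 1 : ℕ) / N) ^ α) < ε := by
    rw [div_le_iff₀ hε] at hle_N
    rw [Real.div_rpow (by positivity) hN'.le, ← mul_div_assoc, ← mul_div_assoc,
      div_lt_iff₀ (by positivity)]
    linarith [show 0 < (N : ℝ) ^ α * ε by positivity]
  calc Nf f ε ≤ C₁ * N := hC₁ f hf N hN _ ε (hosc _) hmesh
    _ = ENNReal.ofReal (C₁ * N) := by
      rw [ENNReal.ofReal_mul C₁.coe_nonneg, ENNReal.ofReal_coe_nnreal, ENNReal.ofReal_natCast]
    _ ≤ ENNReal.ofReal ((C₁ + 1) * (2 * (2 * K * R * H / ε) ^ (1 / α))) := by gcongr; linarith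
    _ = _ := by
      rw [mul_div_assoc, Real.mul_rpow (by positivity) (by positivity)]
      ring_nf

end HoelderDerivative

theorem statement1_general (d : ℕ) {α : ℝ} (hα : 0 < α) :
    ∃ C : ℝ, 0 < C ∧
      ∀ m : ℕ, 1 ≤ m → m ≤ d →
        ∀ f : E d → E m, (∀ x ∈ unitCube d, DifferentiableAt ℝ f x) →
          ∀ H : ℝ, 0 ≤ H →
            (∀ x ∈ unitCube d, ∀ y ∈ unitCube d,
              ‖fderiv ℝ f x - fderiv ℝ f y‖ ≤ H * ‖x - y‖ ^ α) →
            ∀ ε : ℝ, 0 < ε → Nf f ε ≤ ENNReal.ofReal (C * (H / ε) ^ (1 / α)) := by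
  rcases d with _ | n
  · exact ⟨1, one_pos, fun m hm hmd => by omega⟩
  obtain ⟨C, hC, hsquare⟩ := exists_Nf_le_of_hoelder_square n hα
  refine ⟨C, hC, fun m hm hmd f hf H hH hhoelder ε hε => ?_⟩
  obtain ⟨ι⟩ := exists_linearIsometry hmd
  refine (Nf_le_Nf_linearIsometry_comp hm hf ι ε).trans (hsquare (ι ∘ f) (fun x hx =>
    ι.toContinuousLinearMap.differentiableAt.comp x (hf x hx)) H hH (fun x hx y hy => ?_) ε hε)
  rw [fderiv_linearIsometry_comp (hf x hx), fderiv_linearIsometry_comp (hf y hy),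
    ← ContinuousLinearMap.comp_sub, ι.norm_toContinuousLinearMap_comp]
  exact hhoelder x hx y hy

/-- upper bound for `N_f(ε)` for `C^{1,α}` functions. -/
theorem statement1 (d : ℕ) (hd : 1 ≤ d) (α : ℝ) (hα : α ∈ Set.Ioc (0:ℝ) 1) :
    ∃ C : ℝ, 0 < C ∧
      ∀ m : ℕ, 1 ≤ m → m ≤ d →
        ∀ f : E d → E m, ContDiff ℝ 1 f →
          ∀ H : ℝ, 0 ≤ H →
            (∀ x ∈ unitCube d, ∀ y ∈ unitCube d,
              ‖fderiv ℝ f x - fderiv ℝ f y‖ ≤ H * ‖x - y‖ ^ α) →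
            ∃ ε₀ : ℝ, 0 < ε₀ ∧ ∀ ε : ℝ, 0 < ε → ε ≤ ε₀ →
              Nf f ε ≤ ENNReal.ofReal (C * (H / ε) ^ (1/α)) :=
  let ⟨C, hC, hbound⟩ := statement1_general d hα.1
  ⟨C, hC, fun m hm hmd f hf H hH hhoelder => ⟨1, one_pos, fun ε hε _ => hbound m hm hmd f
    (fun x _ => hf.differentiable one_ne_zero x) H hH hhoelder ε hε⟩⟩
end
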